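/- arXiv:2202.01247 — 2 statements merged into one kernel-verified Lean document; each statement's English description precedes it below -/
import Mathlib

section
/- Let a, b ∈ F^* with |b| ≤ |a| ≤ 1 and let j be an integer with 0 ≤ j ≤ min(val(a),val(b)). Then I(j;a,b) = |a|^{−1} ∫∫ ψ[(1 − ρa^{−1}b)x − (1+2ρ)y + 2a^{−1}b²x³] dx dy, where the integral is over (x,y) ∈ F² such that bx − ρay ∈ a𝔭^{−j}, bx ∈ 𝔭^{j}, ay ∈ 𝔭^{j}, and y(bx+ay) ∈ 𝔭^{j}. -/
/-!
Suppose first that the ideals `𝔭^k` are null measurable. The four-variable integrand is locally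
constant and, because `bx + ay` and `bx + ρ²ay` both lie in `𝔭^0` on its support, it is compactly
supported (`kern_support`, `kern_level`). The integral of such a function is a finite sum over
representatives (`integral_eq_sum`), so the order of integration is free and affine changes of
variable scale by the absolute value of the coefficient.

Integrate over `z` first. In terms of `w = (xb + yρ²a)s - xy - ρz ∈ 𝔭^{-j}` the phase is linear,
and orthogonality of characters on `𝔭^{-j}` leaves `q^j` times the condition `bx + ρay ∈ 𝔭^j`
(`integral_z`). What remains is linear in `s`. In terms of `w = x + as ∈ 𝔭^{-j}` the same
orthogonality leaves `q^j |a|⁻¹`, the condition `a⁻¹(b²x² - abxy + a²y²) ∈ 𝔭^j` and the phase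
`x + y + 2a⁻¹b²x³`; here the cross terms combine because
`b²x² - abxy + a²y² = (bx + ρay)(bx + ρ²ay)` (`integral_s`). The powers of `q` cancel the factor
`q^{-2j}` up to `|a|⁻¹`. Finally the measure preserving substitution
`y ↦ -(1+2ρ)y - ρa⁻¹bx` (the number `1 + 2ρ` squares to `-3`, a unit as `p > 3`) carries the
conditions to those of `D_j(a,b)` and the phase to the stated one (`integral_s_subst`).

The setting fixes an arbitrary σ-algebra on `F`, so balls need not be measurable. If a single ideal
`𝔭^k` is null measurable, all are (`ballsMeasurable_of_exists`). Otherwise the innermost integrands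
on both sides, whose supports in one variable are empty or a ball, are non-measurable or zero, and
both sides vanish (`integral_eq_zero_of_not`).
-/

open MeasureTheory
open Classical

noncomputable section

/-- The ambient setting: a nonarchimedean local field `F` whose residue field has
cardinality `q` and characteristic `p > 3`, containing a primitive cube root of
unity `ρ`, with normalized valuation `val`, uniformizer `ϖ`, an additive character
`ψ` which is trivial on the ring of integers `O` and nontrivial on `𝔭⁻¹`, an
additive Haar measure `μ` normalized by `μ(O) = 1` (so `μ(𝔭^j) = q^{-j}`), and a
multiplicative Haar measure `μs` on `F^*` normalized by `μs(O^*) = 1`. -/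
structure CubicSetup (F : Type*) [Field F] [MeasurableSpace F] where
  q : ℕ
  val : F → ℤ
  ϖ : F
  ρ : F
  ψ : F → ℂ
  μ : Measure F
  μs : Measure F
  residue_char : ∃ p f : ℕ, p.Prime ∧ 3 < p ∧ 0 < f ∧ q = p ^ f
  val_mul : ∀ x y : F, x ≠ 0 → y ≠ 0 → val (x * y) = val x + val y
  val_add : ∀ x y : F, x ≠ 0 → y ≠ 0 → x + y ≠ 0 → min (val x) (val y) ≤ val (x + y)
  uniformizer_ne_zero : ϖ ≠ 0
  val_uniformizer : val ϖ = 1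
  val_surjective : ∀ n : ℤ, ∃ x : F, x ≠ 0 ∧ val x = n
  rho_prim_cubic : ρ ^ 2 + ρ + 1 = 0
  psi_add : ∀ x y : F, ψ (x + y) = ψ x * ψ y
  psi_trivial_on_O : ∀ x : F, x ≠ 0 → 0 ≤ val x → ψ x = 1
  psi_zero : ψ 0 = 1
  psi_nontrivial : ∃ x : F, x ≠ 0 ∧ -1 ≤ val x ∧ ψ x ≠ 1
  mu_add_invariant : ∀ (a : F) (s : Set F), μ ((a + ·) ⁻¹' s) = μ s
  mu_ball : ∀ j : ℤ, μ {x : F | x = 0 ∨ j ≤ val x} = ENNReal.ofReal ((q : ℝ) ^ (-j))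
  mus_mul_invariant : ∀ a : F, a ≠ 0 → ∀ s : Set F, μs ((a * ·) ⁻¹' s) = μs s
  mus_units : μs {x : F | x ≠ 0 ∧ val x = 0} = 1
  mus_zero : μs {0} = 0

namespace CubicSetup

variable {F : Type*} [Field F] [MeasurableSpace F] (S : CubicSetup F)

/-- The normalized absolute value `|x| = q^{-val x}` (with `|0| = 0`). -/
def A (x : F) : ℝ := if x = 0 then 0 else (S.q : ℝ) ^ (-S.val x)

/-- Membership in the ring of integers `O`. -/
def inO (x : F) : Prop := x = 0 ∨ 0 ≤ S.val x

/-- The fractional ideal `𝔭^j = {x : val x ≥ j}`. -/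
def pid (j : ℤ) : Set F := {x : F | x = 0 ∨ j ≤ S.val x}

/-- The cubic exponential integral `C(a,b) = ∫_O ψ(ax + bx³) dx`. -/
def Cint (a b : F) : ℂ := ∫ x in S.pid 0, S.ψ (a * x + b * x ^ 3) ∂S.μ

/-- The cubic exponential integral `C_ℓ(a,b) = ∫_{val x = ℓ} ψ(ax + bx³) dx`. -/
def Cl (ℓ : ℤ) (a b : F) : ℂ :=
  ∫ x in {u : F | u ≠ 0 ∧ S.val u = ℓ}, S.ψ (a * x + b * x ^ 3) ∂S.μ

/-- The cubic exponential integral `C₀(a,b) = ∫_{O^*} ψ(au + bu³) du`. -/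
def C0 (a b : F) : ℂ :=
  ∫ u in {x : F | x ≠ 0 ∧ S.val x = 0}, S.ψ (a * u + b * u ^ 3) ∂S.μ

/-- The Kloosterman integral `K(a,b) = ∫_{O^*} ψ(au + bu⁻¹) du`. -/
def Kl (a b : F) : ℂ :=
  ∫ u in {x : F | x ≠ 0 ∧ S.val x = 0}, S.ψ (a * u + b * u⁻¹) ∂S.μ

/-- `Z` is a complete set of representatives for `𝔭^L` modulo `𝔭^ℓ`. -/
def IsReps (L ℓ : ℤ) (Z : Finset F) : Prop :=
  (∀ z ∈ Z, z ∈ S.pid L) ∧ ∀ x ∈ S.pid L, ∃! z, z ∈ Z ∧ x - z ∈ S.pid ℓ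

/-- `R` is a complete set of representatives of `O^*` for the units of the
residue field `(O/𝔭)^*`. -/
def IsUnitReps (R : Finset F) : Prop :=
  (∀ r ∈ R, r ≠ 0 ∧ S.val r = 0) ∧
    ∀ x : F, x ≠ 0 → S.val x = 0 → ∃! r, r ∈ R ∧ x - r ∈ S.pid 1

/-- The big cell orbital integral `I(a,b)`: the integral over `(x,y,z,s) ∈ F⁴`,
`t ∈ F^*` of the characteristic function of `O^8` evaluated at
`(0, t, t⁻¹a, t(x+as), t⁻¹b, t(bs−y), t⁻¹(xb+yρ²a), t[(xb+yρ²a)s−(xy+zρ)])`,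
times `|t|² ψ[x + y + 2a(xy−z)yρ² − 2bxzρ]`, w.r.t. `d*t ds dx dy dz`. -/
def Iab (a b : F) : ℂ :=
  ∫ z, (∫ y, (∫ x, (∫ s, (∫ t,
    (if S.inO (0 : F) ∧ S.inO t ∧ S.inO (t⁻¹ * a) ∧ S.inO (t * (x + a * s)) ∧
        S.inO (t⁻¹ * b) ∧ S.inO (t * (b * s - y)) ∧
        S.inO (t⁻¹ * (x * b + y * S.ρ ^ 2 * a)) ∧
        S.inO (t * ((x * b + y * S.ρ ^ 2 * a) * s - (x * y + z * S.ρ)))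
      then ((S.A t : ℂ) ^ 2) *
          S.ψ (x + y + 2 * a * (x * y - z) * y * S.ρ ^ 2 - 2 * b * x * z * S.ρ)
      else 0) ∂S.μs) ∂S.μ) ∂S.μ) ∂S.μ) ∂S.μ

/-- The integral `I(j; a, b)`. -/
def Ij (j : ℤ) (a b : F) : ℂ :=
  (S.q : ℂ) ^ (-(2 * j)) *
    ∫ z, (∫ y, (∫ x, (∫ s,
      (if x + a * s ∈ S.pid (-j) ∧ y - b * s ∈ S.pid (-j) ∧
          (x * b + y * S.ρ ^ 2 * a) * s - (x * y + z * S.ρ) ∈ S.pid (-j) ∧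
          x * b + y * S.ρ ^ 2 * a ∈ S.pid j
        then S.ψ (x + y + 2 * a * S.ρ ^ 2 * x * y ^ 2 -
            (2 * S.ρ * b * x + 2 * S.ρ ^ 2 * a * y) * z)
        else 0) ∂S.μ) ∂S.μ) ∂S.μ) ∂S.μ

/-- The domain `D_j(a,b) = {(x,y) : bx − ρay ∈ a𝔭^{-j}, bx ∈ 𝔭^j, ay ∈ 𝔭^j,
y(bx+ay) ∈ 𝔭^j}`. -/
def Dset (j : ℤ) (a b : F) : Set (F × F) :=
  {p : F × F | a⁻¹ * (b * p.1 - S.ρ * a * p.2) ∈ S.pid (-j) ∧ b * p.1 ∈ S.pid j ∧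
    a * p.2 ∈ S.pid j ∧ p.2 * (b * p.1 + a * p.2) ∈ S.pid j}

/-- The common integrand `ψ[(1 − ρa⁻¹b)x − (1+2ρ)y + 2a⁻¹b²x³]`. -/
def integrand (a b x y : F) : ℂ :=
  S.ψ ((1 - S.ρ * a⁻¹ * b) * x - (1 + 2 * S.ρ) * y + 2 * a⁻¹ * b ^ 2 * x ^ 3)

/-- `I₁^{(j)}(a,b)`: the part of the integral with `y ∈ 𝔭^{-m}`, where
`m = min(j, val(a)−j, ⌊(val(a)−j)/2⌋)`. -/
def I1j (j : ℤ) (a b : F) : ℂ :=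
  ((S.A a : ℂ))⁻¹ * ∫ y, (∫ x,
    (if (x, y) ∈ S.Dset j a b ∧
        y ∈ S.pid (-(min j (min (S.val a - j) ((S.val a - j) / 2))))
      then S.integrand a b x y else 0) ∂S.μ) ∂S.μ

/-- `I₂^{(j)}(a,b)`: the part of the integral with `y ∉ 𝔭^{-j}`. -/
def I2j (j : ℤ) (a b : F) : ℂ :=
  ((S.A a : ℂ))⁻¹ * ∫ y, (∫ x,
    (if (x, y) ∈ S.Dset j a b ∧ y ∉ S.pid (-j)
      then S.integrand a b x y else 0) ∂S.μ) ∂S.μ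

/-- `I₃^{(j)}(a,b)`: the part of the integral with `y ∈ 𝔭^{-j}` and `ay² ∉ 𝔭^j`. -/
def I3j (j : ℤ) (a b : F) : ℂ :=
  ((S.A a : ℂ))⁻¹ * ∫ y, (∫ x,
    (if (x, y) ∈ S.Dset j a b ∧ y ∈ S.pid (-j) ∧ a * y ^ 2 ∉ S.pid j
      then S.integrand a b x y else 0) ∂S.μ) ∂S.μ

/-- `G_j^ℓ(a,b) = ∫∫_{Γ_j} ψ(ϖ^ℓ b⁻¹ x − 27⁻¹ ϖ^{3ℓ} a⁻¹b⁻¹ x³ + ϖ^ℓ a⁻¹ y) dx dy`. -/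
def Gint (j ℓ : ℤ) (a b : F) : ℂ :=
  ∫ y, (∫ x,
    (if S.inO x ∧ S.inO y ∧ a⁻¹ * (x ^ 3 - y ^ 3) ∈ S.pid (-j)
      then S.ψ (S.ϖ ^ ℓ * b⁻¹ * x - (27 : F)⁻¹ * S.ϖ ^ (3 * ℓ) * a⁻¹ * b⁻¹ * x ^ 3 +
          S.ϖ ^ ℓ * a⁻¹ * y)
      else 0) ∂S.μ) ∂S.μ

/-- `Γ_j = {(x,y) ∈ O × O : x³ − y³ ∈ a𝔭^{-j}}`. -/
def Gamma (a : F) (j : ℤ) : Set (F × F) :=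
  {p : F × F | S.inO p.1 ∧ S.inO p.2 ∧ a⁻¹ * (p.1 ^ 3 - p.2 ^ 3) ∈ S.pid (-j)}

/-- `𝔭^{⌈m/3⌉} × 𝔭^{⌈m/3⌉}`. -/
def Ball (m : ℤ) : Set (F × F) := S.pid (-((-m) / 3)) ×ˢ S.pid (-((-m) / 3))

/-- `{(x,y) : |x| = q^{-n}, y ∈ ρ^k x + 𝔭^{m−2n}}`. -/
def Ann (m n : ℤ) (k : ℕ) : Set (F × F) :=
  {p : F × F | p.1 ≠ 0 ∧ S.val p.1 = n ∧ p.2 - S.ρ ^ k * p.1 ∈ S.pid (m - 2 * n)}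

/-- The degenerate orbital integral `I₁(a)`, integrated w.r.t. `dx dy dz d*t`. -/
def Ione (a : F) : ℂ :=
  ∫ t, (∫ z, (∫ y, (∫ x,
    (if S.inO t ∧ S.inO (t * (a + x)) ∧ S.inO (a ^ (-2 : ℤ) * t⁻¹) ∧ S.inO (t * y) ∧
        S.inO (a ^ (-2 : ℤ) * t⁻¹ * x) ∧
        S.inO (t * (S.ρ * a * y - S.ρ ^ 2 * x * y - z))
      then ((S.A t : ℂ) ^ 2) *
          S.ψ (-(S.ρ * a⁻¹ * x * y) - S.ρ ^ 2 * a⁻¹ * z + a ^ (-2 : ℤ) * x * z + x + y)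
      else 0) ∂S.μ) ∂S.μ) ∂S.μ) ∂S.μs

/-- The degenerate orbital integral `I₂(a)`, integrated w.r.t. `dx dy dz d*t`. -/
def Itwo (a : F) : ℂ :=
  ∫ t, (∫ z, (∫ y, (∫ x,
    (if S.inO t ∧ S.inO (a ^ (-2 : ℤ) * t⁻¹) ∧ S.inO (t * x) ∧ S.inO (t * (a - y)) ∧
        S.inO (a ^ (-2 : ℤ) * t⁻¹ * y) ∧ S.inO (t * (x * a - x * y - z * S.ρ))
      then ((S.A t : ℂ) ^ 2) *
          S.ψ (a ^ (-2 : ℤ) * (x * y - z) * y - S.ρ * (x * y * S.ρ ^ 2 + z) * a⁻¹ + x + y)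
      else 0) ∂S.μ) ∂S.μ) ∂S.μ) ∂S.μs


/-! ### The valuation and the fractional ideals -/

lemma val_one' : S.val 1 = 0 := by
  have := S.val_mul 1 1 one_ne_zero one_ne_zero
  rw [mul_one] at this; omega

lemma val_neg' (x : F) : S.val (-x) = S.val x := by
  by_cases hx : x = 0
  · simp [hx]
  have h1 := S.val_mul (-1) (-1) (by simp) (by simp)
  rw [neg_mul_neg, mul_one, S.val_one'] at h1
  have h2 := S.val_mul (-1) x (by simp) hx
  rw [neg_one_mul] at h2; omega

lemma zero_mem_pid (k : ℤ) : (0 : F) ∈ S.pid k := Or.inl rfl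

lemma mem_pid_iff {x : F} (hx : x ≠ 0) (k : ℤ) : x ∈ S.pid k ↔ k ≤ S.val x := by
  simp [pid, hx]

lemma neg_mem_pid {x : F} {k : ℤ} (hx : x ∈ S.pid k) : -x ∈ S.pid k := by
  rcases hx with h | h
  · left; simp [h]
  · right; rwa [S.val_neg']

lemma add_mem_pid {x y : F} {k : ℤ} (hx : x ∈ S.pid k) (hy : y ∈ S.pid k) :
    x + y ∈ S.pid k := by
  by_cases h1 : x = 0
  · simpa [h1] using hy
  by_cases h2 : y = 0
  · simpa [h2] using hx
  by_cases h3 : x + y = 0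
  · exact Or.inl h3
  rw [S.mem_pid_iff h1] at hx
  rw [S.mem_pid_iff h2] at hy
  rw [S.mem_pid_iff h3]
  exact (le_min hx hy).trans (S.val_add x y h1 h2 h3)

lemma sub_mem_pid {x y : F} {k : ℤ} (hx : x ∈ S.pid k) (hy : y ∈ S.pid k) :
    x - y ∈ S.pid k := by
  rw [sub_eq_add_neg]; exact S.add_mem_pid hx (S.neg_mem_pid hy)

lemma pid_mono {k m : ℤ} (h : k ≤ m) {x : F} (hx : x ∈ S.pid m) : x ∈ S.pid k := by
  rcases hx with h' | h'
  · exact Or.inl h'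
  · exact Or.inr (h.trans h')

lemma mul_mem_pid_iff {c : F} (hc : c ≠ 0) (x : F) (k : ℤ) :
    c * x ∈ S.pid k ↔ x ∈ S.pid (k - S.val c) := by
  by_cases hx : x = 0
  · simp [hx, S.zero_mem_pid]
  rw [S.mem_pid_iff (mul_ne_zero hc hx), S.mem_pid_iff hx, S.val_mul _ _ hc hx]
  omega

lemma mul_mem_pid {x y : F} {k m : ℤ} (hx : x ∈ S.pid k) (hy : y ∈ S.pid m) :
    x * y ∈ S.pid (k + m) := by
  by_cases h1 : x = 0
  · left; simp [h1]
  rw [S.mul_mem_pid_iff h1]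
  rw [S.mem_pid_iff h1] at hx
  exact S.pid_mono (by omega) hy

lemma one_mem_pid : (1 : F) ∈ S.pid 0 := Or.inr S.val_one'.ge

/-- Membership in `𝔭^k` depends only on the class modulo `𝔭^k`. -/
lemma mem_pid_congr {x y : F} {k : ℤ} (h : x - y ∈ S.pid k) : x ∈ S.pid k ↔ y ∈ S.pid k := by
  constructor
  · intro hx; simpa using S.sub_mem_pid hx h
  · intro hy; simpa using S.add_mem_pid h hy

lemma natCast_mem_pid (n : ℕ) : (n : F) ∈ S.pid 0 := by
  induction n with
  | zero => simpa using S.zero_mem_pid 0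
  | succ n ih => push_cast; exact S.add_mem_pid ih S.one_mem_pid

lemma intCast_mem_pid (n : ℤ) : (n : F) ∈ S.pid 0 := by
  rcases Int.eq_nat_or_neg n with ⟨m, rfl | rfl⟩
  · simpa using S.natCast_mem_pid m
  · simpa using S.neg_mem_pid (S.natCast_mem_pid m)

lemma rho_ne_zero : S.ρ ≠ 0 := by
  intro h
  have := S.rho_prim_cubic
  simp [h] at this

lemma rho_cube : S.ρ ^ 3 = 1 := by
  linear_combination (S.ρ - 1) * S.rho_prim_cubic

lemma val_rho : S.val S.ρ = 0 := by
  have h0 := S.rho_ne_zero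
  have h1 := S.val_mul (S.ρ * S.ρ) S.ρ (mul_ne_zero h0 h0) h0
  rw [S.val_mul _ _ h0 h0, show S.ρ * S.ρ * S.ρ = 1 by rw [← S.rho_cube]; ring, S.val_one'] at h1
  omega

lemma rho_mem_pid : S.ρ ∈ S.pid 0 := Or.inr S.val_rho.ge

lemma val_inv' {x : F} (hx : x ≠ 0) : S.val x⁻¹ = -S.val x := by
  have := S.val_mul x x⁻¹ hx (inv_ne_zero hx)
  rw [mul_inv_cancel₀ hx, S.val_one'] at this
  omega

lemma one_lt_q : 1 < S.q := by
  obtain ⟨p, f, hp, h3, hf, hq⟩ := S.residue_char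
  rw [hq]; exact Nat.one_lt_pow hf.ne' (by omega)

lemma q_pos : (0 : ℝ) < S.q := by
  have := S.one_lt_q
  positivity

lemma q_ne_zero : (S.q : ℂ) ≠ 0 := by
  have := S.one_lt_q
  exact_mod_cast (by omega : S.q ≠ 0)

/-! ### The additive character -/

lemma psi_ne_zero (x : F) : S.ψ x ≠ 0 := by
  intro h
  have := S.psi_add x (-x)
  rw [add_neg_cancel, S.psi_zero, h, zero_mul] at this
  exact one_ne_zero this

lemma psi_eq_one {x : F} (hx : x ∈ S.pid 0) : S.ψ x = 1 := by
  by_cases h : x = 0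
  · rw [h, S.psi_zero]
  · exact S.psi_trivial_on_O x h ((S.mem_pid_iff h 0).1 hx)

lemma psi_congr {x y : F} (h : x - y ∈ S.pid 0) : S.ψ x = S.ψ y := by
  have := S.psi_add (x - y) y
  rwa [sub_add_cancel, S.psi_eq_one h, one_mul] at this

/-! ### Null measurability of the ideals -/

lemma mu_pid (k : ℤ) : S.μ (S.pid k) = ENNReal.ofReal ((S.q : ℝ) ^ (-k)) := S.mu_ball k

lemma mu_pid_ne_top (k : ℤ) : S.μ (S.pid k) ≠ ⊤ := by
  rw [S.mu_pid]; exact ENNReal.ofReal_ne_top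

/-- The coset `c + 𝔭^k`. -/
def coset (c : F) (k : ℤ) : Set F := {x | x - c ∈ S.pid k}

lemma coset_eq (c : F) (k : ℤ) : S.coset c k = (-c + ·) ⁻¹' S.pid k := by
  ext x; simp [coset, neg_add_eq_sub]

lemma mu_coset (c : F) (k : ℤ) : S.μ (S.coset c k) = ENNReal.ofReal ((S.q : ℝ) ^ (-k)) := by
  rw [S.coset_eq, S.mu_add_invariant, S.mu_pid]

/-- The measurable space on `F` is arbitrary, so translations need not be measurable maps.
Null measurability of a ball still passes to its translates, because it can be tested on the
outer measure, which is translation invariant. -/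
lemma nullMeasurable_coset {c d : F} {k : ℤ} (h : NullMeasurableSet (S.coset c k) S.μ) :
    NullMeasurableSet (S.coset d k) S.μ := by
  set T := toMeasurable S.μ (S.coset d k) with hT
  have hTm : MeasurableSet T := measurableSet_toMeasurable _ _
  have hTs : S.coset d k ⊆ T := subset_toMeasurable _ _
  have hTμ : S.μ T = ENNReal.ofReal ((S.q : ℝ) ^ (-k)) := by
    rw [hT, measure_toMeasurable, S.mu_coset]
  set T' := ((d - c) + ·) ⁻¹' T with hT'
  have hT'μ : S.μ T' = ENNReal.ofReal ((S.q : ℝ) ^ (-k)) := by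
    rw [hT', S.mu_add_invariant, hTμ]
  have hsub : S.coset c k ⊆ T' := by
    intro x hx
    apply hTs
    change d - c + x - d ∈ S.pid k
    convert (show x - c ∈ S.pid k from hx) using 1
    ring
  have h1 := measure_inter_add_sdiff₀ (μ := S.μ) T' h
  rw [Set.inter_eq_self_of_subset_right hsub, S.mu_coset, hT'μ] at h1
  have h2 : S.μ (T' \ S.coset c k) = 0 := by
    have : ENNReal.ofReal ((S.q : ℝ) ^ (-k)) + S.μ (T' \ S.coset c k)
        = ENNReal.ofReal ((S.q : ℝ) ^ (-k)) + 0 := by rw [h1, add_zero]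
    exact (ENNReal.add_right_inj ENNReal.ofReal_ne_top).1 this
  have h3 : S.μ (T \ S.coset d k) = 0 := by
    rw [← h2, ← S.mu_add_invariant (d - c) (T \ S.coset d k)]
    congr 1
    ext x
    simp only [coset, Set.mem_preimage, Set.mem_sdiff, Set.mem_ofPred_eq, hT',
      show d - c + x - d = x - c by ring]
  have h4 : S.coset d k =ᵐ[S.μ] T := by
    rw [ae_eq_set]
    exact ⟨by rw [Set.sdiff_eq_empty.2 hTs]; simp, h3⟩
  exact hTm.nullMeasurableSet.congr h4.symm

lemma coset_zero (k : ℤ) : S.coset 0 k = S.pid k := by ext x; simp [coset]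

lemma coset_disjoint {c d : F} {k : ℤ} (h : c - d ∉ S.pid k) :
    Disjoint (S.coset c k) (S.coset d k) := by
  rw [Set.disjoint_left]
  intro x hx hy
  apply h
  convert S.sub_mem_pid (show x - d ∈ S.pid k from hy) (show x - c ∈ S.pid k from hx) using 1
  ring

/-- Pairwise incongruent points of `𝔭^m` modulo a null measurable `𝔭^k` number at most
`q^{k-m}`. -/
lemma card_le_of_nullMeasurable {k m : ℤ} (hmk : m ≤ k) (h : NullMeasurableSet (S.pid k) S.μ)
    (Z : Finset F) (hZ : ∀ z ∈ Z, z ∈ S.pid m)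
    (hd : ∀ z ∈ Z, ∀ w ∈ Z, z ≠ w → z - w ∉ S.pid k) :
    (Z.card : ℝ) ≤ (S.q : ℝ) ^ (k - m) := by
  have hN : ∀ z ∈ Z, NullMeasurableSet (S.coset z k) S.μ := fun z _ => by
    rw [← S.coset_zero] at h
    exact S.nullMeasurable_coset h
  have h1 : S.μ (⋃ z ∈ Z, S.coset z k) = ∑ z ∈ Z, S.μ (S.coset z k) :=
    measure_biUnion_finset₀
      (fun z hz w hw hzw => (S.coset_disjoint (hd z hz w hw hzw)).aedisjoint) hN
  have h2 : (⋃ z ∈ Z, S.coset z k) ⊆ S.pid m := by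
    intro x hx
    simp only [Set.mem_iUnion] at hx
    obtain ⟨z, hz, hx⟩ := hx
    simpa using S.add_mem_pid (S.pid_mono hmk hx) (hZ z hz)
  have h3 := measure_mono (μ := S.μ) h2
  rw [h1, S.mu_pid] at h3
  simp only [S.mu_coset, Finset.sum_const, nsmul_eq_mul] at h3
  have hq := S.q_pos
  rw [← ENNReal.ofReal_natCast, ← ENNReal.ofReal_mul (by positivity),
    ENNReal.ofReal_le_ofReal_iff (by positivity)] at h3
  have h4 : (S.q : ℝ) ^ (k - m) = (S.q : ℝ) ^ (-m) * (S.q : ℝ) ^ k := by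
    rw [← zpow_add₀ hq.ne']; congr 1; ring
  have h5 : (S.q : ℝ) ^ (-k) * (S.q : ℝ) ^ k = 1 := by
    rw [← zpow_add₀ hq.ne']; simp
  calc (Z.card : ℝ) = Z.card * (S.q : ℝ) ^ (-k) * (S.q : ℝ) ^ k := by rw [mul_assoc, h5, mul_one]
    _ ≤ (S.q : ℝ) ^ (-m) * (S.q : ℝ) ^ k := by gcongr
    _ = _ := h4.symm

lemma exists_reps_of_nullMeasurable {k m : ℤ} (hmk : m ≤ k)
    (h : NullMeasurableSet (S.pid k) S.μ) :
    ∃ Z : Finset F, S.IsReps m k Z ∧ (Z.card : ℝ) ≤ (S.q : ℝ) ^ (k - m) := by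
  -- A family of pairwise incongruent points of maximal size is a system of representatives.
  let good : Finset F → Prop := fun Z => (∀ z ∈ Z, z ∈ S.pid m) ∧
    ∀ z ∈ Z, ∀ w ∈ Z, z ≠ w → z - w ∉ S.pid k
  have hb : ∀ Z, good Z → Z.card ≤ ⌊(S.q : ℝ) ^ (k - m)⌋₊ := fun Z hZ =>
    Nat.le_floor (S.card_le_of_nullMeasurable hmk h Z hZ.1 hZ.2)
  obtain ⟨Z, hZ, hZc⟩ := Nat.findGreatest_spec (P := fun n => ∃ Z, good Z ∧ Z.card = n)
    (Nat.zero_le ⌊(S.q : ℝ) ^ (k - m)⌋₊) ⟨∅, by simp [good], rfl⟩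
  refine ⟨Z, ⟨hZ.1, fun x hx => ?_⟩, S.card_le_of_nullMeasurable hmk h Z hZ.1 hZ.2⟩
  have huniq : ∀ z w, z ∈ Z → w ∈ Z → x - z ∈ S.pid k → x - w ∈ S.pid k → z = w := by
    intro z w hz hw h1 h2
    by_contra hne
    apply hZ.2 z hz w hw hne
    convert S.sub_mem_pid h2 h1 using 1
    ring
  by_cases hxe : ∃ z ∈ Z, x - z ∈ S.pid k
  · obtain ⟨z, hz, hxz⟩ := hxe
    exact ⟨z, ⟨hz, hxz⟩, fun w hw => huniq w z hw.1 hz hw.2 hxz⟩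
  · exfalso
    push Not at hxe
    have hxZ : x ∉ Z := fun hxZ => hxe x hxZ (by simpa using S.zero_mem_pid k)
    have hg : good (insert x Z) := by
      refine ⟨?_, ?_⟩
      · intro z hz
        rcases Finset.mem_insert.1 hz with rfl | hz
        · exact hx
        · exact hZ.1 z hz
      · intro z hz w hw hne
        rcases Finset.mem_insert.1 hz with h1 | h1 <;> rcases Finset.mem_insert.1 hw with h2 | h2
        · exact absurd (h1.trans h2.symm) hne
        · rw [h1]; exact hxe w h2
        · intro hc
          apply hxe z h1
          rw [← h2, ← neg_sub]
          exact S.neg_mem_pid hc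
        · exact hZ.2 z h1 w h2 hne
    have := Nat.le_findGreatest (P := fun n => ∃ Z, good Z ∧ Z.card = n) (hb _ hg) ⟨_, hg, rfl⟩
    rw [Finset.card_insert_of_notMem hxZ, hZc] at this
    omega

lemma pid_eq_biUnion {m k : ℤ} (hmk : m ≤ k) {Z : Finset F} (hZ : S.IsReps m k Z) :
    S.pid m = ⋃ z ∈ Z, S.coset z k := by
  ext x
  simp only [Set.mem_iUnion]
  constructor
  · intro hx
    obtain ⟨z, ⟨hz, hxz⟩, -⟩ := hZ.2 x hx
    exact ⟨z, hz, hxz⟩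
  · rintro ⟨z, hz, hx⟩
    simpa using S.add_mem_pid (S.pid_mono hmk hx) (hZ.1 z hz)

/-- Representatives scale: `c · Z` represents `𝔭^{m + val c}` modulo `𝔭^{k + val c}`. -/
lemma IsReps.smul {m k : ℤ} {Z : Finset F} (hZ : S.IsReps m k Z) {c : F} (hc : c ≠ 0)
    {m' k' : ℤ} (hm : m' = m + S.val c) (hk : k' = k + S.val c) :
    S.IsReps m' k' (Z.image (c * ·)) := by
  subst hm hk
  refine ⟨?_, ?_⟩
  · intro z hz
    obtain ⟨w, hw, rfl⟩ := Finset.mem_image.1 hz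
    rw [S.mul_mem_pid_iff hc, add_sub_cancel_right]
    exact hZ.1 w hw
  · intro x hx
    have hx' : c⁻¹ * x ∈ S.pid m := by
      rw [S.mul_mem_pid_iff (inv_ne_zero hc), S.val_inv' hc, sub_neg_eq_add]; exact hx
    have key : ∀ w, x - c * w ∈ S.pid (k + S.val c) ↔ c⁻¹ * x - w ∈ S.pid k := by
      intro w
      rw [show x - c * w = c * (c⁻¹ * x - w) by field_simp, S.mul_mem_pid_iff hc,
        add_sub_cancel_right]
    obtain ⟨z, ⟨hz, hxz⟩, hu⟩ := hZ.2 _ hx'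
    refine ⟨c * z, ⟨Finset.mem_image_of_mem _ hz, (key z).2 hxz⟩, ?_⟩
    rintro y ⟨hy, hxy⟩
    obtain ⟨w, hw, rfl⟩ := Finset.mem_image.1 hy
    rw [hu w ⟨hw, (key w).1 hxy⟩]

lemma IsReps.translate {m k : ℤ} {Z : Finset F} (hZ : S.IsReps m k Z) {c : F}
    (hc : c ∈ S.pid m) : S.IsReps m k (Z.image (· + c)) := by
  refine ⟨?_, ?_⟩
  · intro z hz
    obtain ⟨w, hw, rfl⟩ := Finset.mem_image.1 hz
    exact S.add_mem_pid (hZ.1 w hw) hc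
  · intro x hx
    obtain ⟨z, ⟨hz, hxz⟩, hu⟩ := hZ.2 _ (S.sub_mem_pid hx hc)
    refine ⟨z + c, ⟨Finset.mem_image_of_mem _ hz, ?_⟩, ?_⟩
    · convert hxz using 1; ring
    · rintro y ⟨hy, hxy⟩
      obtain ⟨w, hw, rfl⟩ := Finset.mem_image.1 hy
      rw [hu w ⟨hw, by convert hxy using 1; ring⟩]

/-- A subset whose outer measure and that of its complement add up is null measurable. -/
lemma nullMeasurable_of_add_le {E B : Set F} (hEB : E ⊆ B) (hB : NullMeasurableSet B S.μ)
    (hfin : S.μ B ≠ ⊤) (h : S.μ E + S.μ (B \ E) ≤ S.μ B) : NullMeasurableSet E S.μ := by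
  set T₁ := toMeasurable S.μ E
  set T₂ := toMeasurable S.μ (B \ E)
  have h1 : S.μ (T₁ ∪ T₂) + S.μ (T₁ ∩ T₂) = S.μ E + S.μ (B \ E) := by
    rw [measure_union_add_inter T₁ (measurableSet_toMeasurable _ _)]
    rw [measure_toMeasurable, measure_toMeasurable]
  have hcov : B ⊆ T₁ ∪ T₂ := by
    intro x hx
    by_cases hxE : x ∈ E
    · exact Or.inl (subset_toMeasurable _ _ hxE)
    · exact Or.inr (subset_toMeasurable _ _ ⟨hx, hxE⟩)
  have h2 : S.μ B + S.μ (T₁ ∩ T₂) ≤ S.μ B + 0 := by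
    rw [add_zero]
    calc S.μ B + S.μ (T₁ ∩ T₂) ≤ S.μ (T₁ ∪ T₂) + S.μ (T₁ ∩ T₂) := by gcongr
      _ ≤ S.μ B := h1.trans_le h
  have h3 : S.μ (T₁ ∩ T₂) = 0 := by
    simpa using (ENNReal.add_le_add_iff_left hfin).1 h2
  have h4 : E =ᵐ[S.μ] (T₁ ∩ B : Set F) := by
    rw [ae_eq_set]
    constructor
    · rw [Set.sdiff_eq_empty.2 (Set.subset_inter (subset_toMeasurable _ _) hEB)]; simp
    · refine measure_mono_null ?_ h3
      rintro x ⟨⟨hx1, hx2⟩, hx3⟩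
      exact ⟨hx1, subset_toMeasurable _ _ ⟨hx2, hx3⟩⟩
  exact ((measurableSet_toMeasurable _ _).nullMeasurableSet.inter hB).congr h4.symm

/-- All the ideals `𝔭^k` are null measurable for `μ`. -/
def BallsMeasurable : Prop := ∀ k : ℤ, NullMeasurableSet (S.pid k) S.μ

/-- If one ideal is null measurable then all are. Larger ideals are finite unions of cosets.
A smaller one has at most `q^{m-k}` cosets in `𝔭^k`, which is exactly what additivity of the
outer measure on this partition requires. -/
lemma ballsMeasurable_of_exists {k : ℤ} (h : NullMeasurableSet (S.pid k) S.μ) :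
    S.BallsMeasurable := by
  intro m
  have hq := S.q_pos
  rcases le_total m k with hmk | hmk
  · obtain ⟨Z, hZ, -⟩ := S.exists_reps_of_nullMeasurable hmk h
    rw [S.pid_eq_biUnion hmk hZ]
    rw [← S.coset_zero] at h
    exact Finset.nullMeasurableSet_biUnion _ fun z _ => S.nullMeasurable_coset h
  · obtain ⟨Z₀, hZ₀, hcard⟩ := S.exists_reps_of_nullMeasurable
      (show k - (m - k) ≤ k by omega) h
    obtain ⟨c, hc0, hc⟩ := S.val_surjective (m - k)
    have hZ := hZ₀.smul S hc0 (m' := k) (k' := m) (by omega) (by omega)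
    set Z := Z₀.image (c * ·)
    have hZc : (Z.card : ℝ) ≤ (S.q : ℝ) ^ (m - k) := by
      calc (Z.card : ℝ) ≤ Z₀.card := by exact_mod_cast Finset.card_image_le
        _ ≤ _ := by convert hcard using 2; ring
    obtain ⟨z₀, ⟨hz₀, hz₀'⟩, -⟩ := hZ.2 0 (S.zero_mem_pid k)
    have hE : S.coset z₀ m = S.pid m := by
      ext x
      refine S.mem_pid_congr ?_
      convert hz₀' using 1; ring
    refine S.nullMeasurable_of_add_le (B := S.pid k) (fun x => S.pid_mono hmk) h
      (S.mu_pid_ne_top k) ?_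
    have hR : S.pid k \ S.pid m ⊆ ⋃ z ∈ Z.erase z₀, S.coset z m := by
      rintro x ⟨hx, hxm⟩
      obtain ⟨z, ⟨hz, hxz⟩, -⟩ := hZ.2 x hx
      simp only [Set.mem_iUnion]
      refine ⟨z, Finset.mem_erase.2 ⟨?_, hz⟩, hxz⟩
      rintro rfl
      exact hxm (hE ▸ hxz)
    have hR2 : S.μ (S.pid k \ S.pid m) ≤ ∑ z ∈ Z.erase z₀, S.μ (S.coset z m) :=
      (measure_mono hR).trans (measure_biUnion_finset_le _ _)
    calc S.μ (S.pid m) + S.μ (S.pid k \ S.pid m)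
        ≤ S.μ (S.coset z₀ m) + ∑ z ∈ Z.erase z₀, S.μ (S.coset z m) := by
          rw [hE]; gcongr
      _ = ∑ z ∈ Z, S.μ (S.coset z m) := Finset.add_sum_erase Z (fun z => S.μ (S.coset z m)) hz₀
      _ = ENNReal.ofReal (Z.card * (S.q : ℝ) ^ (-m)) := by
          simp only [S.mu_coset, Finset.sum_const, nsmul_eq_mul]
          rw [ENNReal.ofReal_mul (by positivity), ENNReal.ofReal_natCast]
      _ ≤ ENNReal.ofReal ((S.q : ℝ) ^ (m - k) * (S.q : ℝ) ^ (-m)) := by gcongr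
      _ = S.μ (S.pid k) := by
          rw [S.mu_pid, ← zpow_add₀ hq.ne']; congr 2; ring

/-- If no ideal is null measurable, a function supported exactly on a ball is not almost
everywhere strongly measurable, and its Bochner integral is `0` by convention. -/
lemma integral_eq_zero_of_not (hB : ¬ S.BallsMeasurable) (P : F → Prop) [DecidablePred P]
    (g : F → F) (hP : ∀ c, P c → ∃ k, ∀ x, P x ↔ x - c ∈ S.pid k) :
    ∫ x, (if P x then S.ψ (g x) else 0) ∂S.μ = 0 := by
  by_cases hne : ∃ c, P c
  · obtain ⟨c, hc⟩ := hne
    obtain ⟨k, hk⟩ := hP c hc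
    apply integral_undef
    intro hint
    apply hB
    have h1 := hint.aestronglyMeasurable.aemeasurable.nullMeasurable
      (measurableSet_singleton (0 : ℂ)).compl
    have h2 : (fun x => if P x then S.ψ (g x) else 0) ⁻¹' {0}ᶜ = S.coset c k := by
      ext x
      have := S.psi_ne_zero (g x)
      simp [coset, ← hk x, this]
    rw [h2] at h1
    have h3 := S.nullMeasurable_coset (d := 0) h1
    rw [S.coset_zero] at h3
    exact S.ballsMeasurable_of_exists h3
  · push Not at hne
    simp [hne]

section Lemmas

/-! ### Locally constant functions of compact support -/

/-- `f` is supported on `𝔭^L` and invariant under translation by `𝔭^ℓ`. -/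
def Lev1 (L ℓ : ℤ) (f : F → ℂ) : Prop :=
  (∀ x, f x ≠ 0 → x ∈ S.pid L) ∧ ∀ x, ∀ h ∈ S.pid ℓ, f (x + h) = f x

/-- `g` is supported on `𝔭^L × 𝔭^L` and invariant under translation by `𝔭^ℓ × 𝔭^ℓ`. -/
def Lev2 (L ℓ : ℤ) (g : F → F → ℂ) : Prop :=
  (∀ x y, g x y ≠ 0 → x ∈ S.pid L ∧ y ∈ S.pid L) ∧
    ∀ x y, ∀ h ∈ S.pid ℓ, ∀ k ∈ S.pid ℓ, g (x + h) (y + k) = g x y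

/-- `k` is supported on `(𝔭^L)^4` and invariant under translation by `(𝔭^ℓ)^4`. -/
def Lev4 (L ℓ : ℤ) (k : F → F → F → F → ℂ) : Prop :=
  (∀ z y x s, k z y x s ≠ 0 → z ∈ S.pid L ∧ y ∈ S.pid L ∧ x ∈ S.pid L ∧ s ∈ S.pid L) ∧
    ∀ z y x s, ∀ h₁ ∈ S.pid ℓ, ∀ h₂ ∈ S.pid ℓ, ∀ h₃ ∈ S.pid ℓ, ∀ h₄ ∈ S.pid ℓ,
      k (z + h₁) (y + h₂) (x + h₃) (s + h₄) = k z y x s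

variable {S}

lemma BallsMeasurable.coset (hA : S.BallsMeasurable) (c : F) (k : ℤ) :
    NullMeasurableSet (S.coset c k) S.μ :=
  S.nullMeasurable_coset (c := 0) (by rw [S.coset_zero]; exact hA k)

lemma BallsMeasurable.exists_reps (hA : S.BallsMeasurable) {L ℓ : ℤ} (h : L ≤ ℓ) :
    ∃ Z, S.IsReps L ℓ Z :=
  (S.exists_reps_of_nullMeasurable h (hA ℓ)).imp fun _ h => h.1

lemma Lev1.mono {L ℓ L' ℓ' : ℤ} {f : F → ℂ} (hf : S.Lev1 L ℓ f) (hL : L' ≤ L) (hℓ : ℓ ≤ ℓ') :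
    S.Lev1 L' ℓ' f :=
  ⟨fun x hx => S.pid_mono hL (hf.1 x hx), fun x h hh => hf.2 x h (S.pid_mono hℓ hh)⟩

lemma integral_coset_const (hA : S.BallsMeasurable) (c : F) (k : ℤ) (v : ℂ) :
    Integrable ((S.coset c k).indicator fun _ => v) S.μ ∧
      ∫ x, (S.coset c k).indicator (fun _ => v) x ∂S.μ = (S.q : ℂ) ^ (-k) * v := by
  have hfin : S.μ (S.coset c k) ≠ ⊤ := by rw [S.mu_coset]; exact ENNReal.ofReal_ne_top
  have hq := S.q_pos
  constructor
  · exact (integrableOn_const hfin).integrable_indicator₀ (hA.coset c k)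
  · rw [integral_indicator₀ (hA.coset c k), setIntegral_const, Measure.real, S.mu_coset,
      ENNReal.toReal_ofReal (by positivity), Complex.real_smul]
    push_cast
    rfl

/-- The integral of a locally constant function of compact support is a finite sum over any
system of representatives. Fubini and all changes of variables rest on this formula. -/
lemma integral_eq_sum (hA : S.BallsMeasurable) {L ℓ : ℤ} {f : F → ℂ} (hf : S.Lev1 L ℓ f)
    (hL : L ≤ ℓ) {Z : Finset F} (hZ : S.IsReps L ℓ Z) :
    ∫ x, f x ∂S.μ = (S.q : ℂ) ^ (-ℓ) * ∑ z ∈ Z, f z := by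
  have h1 : f = fun x => ∑ z ∈ Z, (S.coset z ℓ).indicator (fun _ => f z) x := by
    funext x
    by_cases hx : x ∈ S.pid L
    · obtain ⟨z, ⟨hz, hxz⟩, hu⟩ := hZ.2 x hx
      rw [Finset.sum_eq_single z]
      · rw [Set.indicator_of_mem (show x ∈ S.coset z ℓ from hxz)]
        simpa using hf.2 z _ hxz
      · intro w hw hwz
        rw [Set.indicator_of_notMem (fun hc : x ∈ S.coset w ℓ => hwz (hu w ⟨hw, hc⟩))]
      · exact fun h => absurd hz h
    · have h0 : f x = 0 := by
        by_contra h; exact hx (hf.1 x h)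
      rw [h0]
      symm
      apply Finset.sum_eq_zero
      intro z hz
      apply Set.indicator_of_notMem
      intro hc
      apply hx
      simpa using S.add_mem_pid (S.pid_mono hL hc) (hZ.1 z hz)
  calc ∫ x, f x ∂S.μ = ∫ x, ∑ z ∈ Z, (S.coset z ℓ).indicator (fun _ => f z) x ∂S.μ := by
        rw [← h1]
    _ = ∑ z ∈ Z, (S.q : ℂ) ^ (-ℓ) * f z := by
        rw [integral_finsetSum _ fun z _ => (integral_coset_const hA z ℓ (f z)).1]
        exact Finset.sum_congr rfl fun z _ => (integral_coset_const hA z ℓ (f z)).2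
    _ = _ := by rw [Finset.mul_sum]

lemma integral_translate (hA : S.BallsMeasurable) {L ℓ : ℤ} {f : F → ℂ} (hf : S.Lev1 L ℓ f)
    (c : F) : ∫ x, f (x + c) ∂S.μ = ∫ x, f x ∂S.μ := by
  -- Enlarge the support ball until it contains `c`.
  obtain ⟨L', hL'L, hL'ℓ, hc⟩ : ∃ L', L' ≤ L ∧ L' ≤ ℓ ∧ c ∈ S.pid L' :=
    ⟨min (min L ℓ) (S.val c), by omega, by omega, Or.inr (by omega)⟩
  have hf' := hf.mono hL'L le_rfl
  have hg : S.Lev1 L' ℓ (fun x => f (x + c)) :=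
    ⟨fun x hx => by simpa using S.sub_mem_pid (hf'.1 _ hx) hc,
      fun x h hh => by
        change f (x + h + c) = f (x + c)
        rw [add_right_comm, hf'.2 _ h hh]⟩
  obtain ⟨Z, hZ⟩ := hA.exists_reps hL'ℓ
  rw [integral_eq_sum hA hg hL'ℓ hZ, integral_eq_sum hA hf' hL'ℓ (hZ.translate S hc),
    Finset.sum_image (by simp)]

lemma integral_scale (hA : S.BallsMeasurable) {L ℓ : ℤ} {f : F → ℂ} (hf : S.Lev1 L ℓ f)
    {c : F} (hc : c ≠ 0) :
    ∫ x, f (c * x) ∂S.μ = (S.q : ℂ) ^ (S.val c) * ∫ x, f x ∂S.μ := by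
  wlog hL : L ≤ ℓ generalizing L
  · exact this (hf.mono (L' := ℓ) (by omega) le_rfl) le_rfl
  have hg : S.Lev1 (L - S.val c) (ℓ - S.val c) (fun x => f (c * x)) :=
    ⟨fun x hx => (S.mul_mem_pid_iff hc x L).1 (hf.1 _ hx),
      fun x h hh => by
        change f (c * (x + h)) = f (c * x)
        rw [mul_add, hf.2 _ _ ((S.mul_mem_pid_iff hc h ℓ).2 hh)]⟩
  obtain ⟨Z, hZ⟩ := hA.exists_reps (show L - S.val c ≤ ℓ - S.val c by omega)
  rw [integral_eq_sum hA hg (by omega) hZ,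
    integral_eq_sum hA hf hL (hZ.smul S hc (by omega) (by omega)),
    Finset.sum_image (fun x _ y _ h => mul_left_cancel₀ hc h), ← mul_assoc,
    ← zpow_add₀ S.q_ne_zero]
  congr 2
  ring

lemma integral_affine (hA : S.BallsMeasurable) {L ℓ : ℤ} {f : F → ℂ} (hf : S.Lev1 L ℓ f)
    {c : F} (hc : c ≠ 0) (d : F) :
    ∫ x, f (c * x + d) ∂S.μ = (S.q : ℂ) ^ (S.val c) * ∫ x, f x ∂S.μ := by
  rw [← integral_scale hA hf hc]
  have h : S.Lev1 (L - S.val c) (ℓ - S.val c) (fun x => f (c * x)) :=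
    ⟨fun x hx => (S.mul_mem_pid_iff hc x L).1 (hf.1 _ hx),
      fun x h hh => by
        change f (c * (x + h)) = f (c * x)
        rw [mul_add, hf.2 _ _ ((S.mul_mem_pid_iff hc h ℓ).2 hh)]⟩
  rw [← integral_translate hA h (c⁻¹ * d)]
  congr 1
  funext x
  rw [mul_add, mul_inv_cancel_left₀ hc]

lemma Lev2.left {L ℓ : ℤ} {g : F → F → ℂ} (hg : S.Lev2 L ℓ g) (y : F) :
    S.Lev1 L ℓ (fun x => g x y) :=
  ⟨fun x hx => (hg.1 x y hx).1, fun x h hh => by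
    simpa using hg.2 x y h hh 0 (S.zero_mem_pid ℓ)⟩

lemma Lev2.right {L ℓ : ℤ} {g : F → F → ℂ} (hg : S.Lev2 L ℓ g) (x : F) :
    S.Lev1 L ℓ (fun y => g x y) :=
  ⟨fun y hy => (hg.1 x y hy).2, fun y h hh => by
    simpa using hg.2 x y 0 (S.zero_mem_pid ℓ) h hh⟩

lemma integral_swap (hA : S.BallsMeasurable) {L ℓ : ℤ} {g : F → F → ℂ} (hg : S.Lev2 L ℓ g)
    (hL : L ≤ ℓ) :
    ∫ x, (∫ y, g x y ∂S.μ) ∂S.μ = ∫ y, (∫ x, g x y ∂S.μ) ∂S.μ := by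
  obtain ⟨Z, hZ⟩ := hA.exists_reps hL
  have h1 : ∀ x, ∫ y, g x y ∂S.μ = (S.q : ℂ) ^ (-ℓ) * ∑ y ∈ Z, g x y :=
    fun x => integral_eq_sum hA (hg.right x) hL hZ
  have h2 : ∀ y, ∫ x, g x y ∂S.μ = (S.q : ℂ) ^ (-ℓ) * ∑ x ∈ Z, g x y :=
    fun y => integral_eq_sum hA (hg.left y) hL hZ
  have e1 : S.Lev1 L ℓ (fun x => ∫ y, g x y ∂S.μ) := by
    refine ⟨fun x hx => ?_, fun x h hh => ?_⟩
    · by_contra hxL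
      apply hx
      have : ∀ y, g x y = 0 := fun y => by
        by_contra hne; exact hxL (hg.1 x y hne).1
      simp [this]
    · exact congrArg _ (funext fun y => (hg.left y).2 x h hh)
  have e2 : S.Lev1 L ℓ (fun y => ∫ x, g x y ∂S.μ) := by
    refine ⟨fun y hy => ?_, fun y h hh => ?_⟩
    · by_contra hyL
      apply hy
      have : ∀ x, g x y = 0 := fun x => by
        by_contra hne; exact hyL (hg.1 x y hne).2
      simp [this]
    · exact congrArg _ (funext fun x => (hg.right x).2 y h hh)
  rw [integral_eq_sum hA e1 hL hZ, integral_eq_sum hA e2 hL hZ]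
  simp only [h1, h2, ← Finset.mul_sum]
  rw [Finset.sum_comm]

/-- The innermost two integrals of a four-variable function leave a two-variable function
of the same level. -/
lemma Lev4.integrate {L ℓ : ℤ} {k : F → F → F → F → ℂ} (hk : S.Lev4 L ℓ k) :
    S.Lev2 L ℓ (fun z y => ∫ x, (∫ s, k z y x s ∂S.μ) ∂S.μ) := by
  refine ⟨fun z y hne => ?_, fun z y h₁ hh₁ h₂ hh₂ => ?_⟩
  · by_contra hc
    apply hne
    have : ∀ x s, k z y x s = 0 := fun x s => by
      by_contra h
      exact hc ⟨(hk.1 z y x s h).1, (hk.1 z y x s h).2.1⟩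
    simp [this]
  · have h0 := S.zero_mem_pid ℓ
    have : ∀ x s, k (z + h₁) (y + h₂) x s = k z y x s := fun x s => by
      simpa using hk.2 z y x s h₁ hh₁ h₂ hh₂ 0 h0 0 h0
    simp [this]

lemma Lev4.integrate' {L ℓ : ℤ} {k : F → F → F → F → ℂ} (hk : S.Lev4 L ℓ k) :
    S.Lev2 L ℓ (fun y x => ∫ s, (∫ z, k z y x s ∂S.μ) ∂S.μ) := by
  refine ⟨fun y x hne => ?_, fun y x h₁ hh₁ h₂ hh₂ => ?_⟩
  · by_contra hc
    apply hne
    have : ∀ s z, k z y x s = 0 := fun s z => by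
      by_contra h
      exact hc ⟨(hk.1 z y x s h).2.1, (hk.1 z y x s h).2.2.1⟩
    simp [this]
  · have h0 := S.zero_mem_pid ℓ
    have : ∀ s z, k z (y + h₁) (x + h₂) s = k z y x s := fun s z => by
      simpa using hk.2 z y x s 0 h0 h₁ hh₁ h₂ hh₂ 0 h0
    simp [this]

/-- The outermost integral of a four-variable function may be carried out first. -/
lemma integral_outer_to_inner (hA : S.BallsMeasurable) {L ℓ : ℤ} {k : F → F → F → F → ℂ}
    (hk : S.Lev4 L ℓ k) (hL : L ≤ ℓ) :
    ∫ z, (∫ y, (∫ x, (∫ s, k z y x s ∂S.μ) ∂S.μ) ∂S.μ) ∂S.μ =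
      ∫ y, (∫ x, (∫ s, (∫ z, k z y x s ∂S.μ) ∂S.μ) ∂S.μ) ∂S.μ := by
  have h0 := S.zero_mem_pid ℓ
  rw [integral_swap hA hk.integrate hL]
  congr 1
  funext y
  have h1 : S.Lev2 L ℓ (fun z x => ∫ s, k z y x s ∂S.μ) := by
    refine ⟨fun z x hne => ?_, fun z x h₁ hh₁ h₂ hh₂ => ?_⟩
    · by_contra hc
      apply hne
      have : ∀ s, k z y x s = 0 := fun s => by
        by_contra h
        exact hc ⟨(hk.1 z y x s h).1, (hk.1 z y x s h).2.2.1⟩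
      simp [this]
    · have : ∀ s, k (z + h₁) y (x + h₂) s = k z y x s := fun s => by
        simpa using hk.2 z y x s h₁ hh₁ 0 h0 h₂ hh₂ 0 h0
      simp [this]
  rw [integral_swap hA h1 hL]
  congr 1
  funext x
  refine integral_swap hA (g := fun z s => k z y x s) ⟨fun z s hne => ?_, ?_⟩ hL
  · exact ⟨(hk.1 z y x s hne).1, (hk.1 z y x s hne).2.2.2⟩
  · intro z s h₁ hh₁ h₂ hh₂
    simpa using hk.2 z y x s h₁ hh₁ 0 h0 0 h0 h₂ hh₂

/-- Orthogonality of characters on the ball `𝔭^{-j}`. -/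
lemma integral_fourier (hA : S.BallsMeasurable) (j : ℤ) (A c : F) :
    S.Lev1 (-j) (max (-j) (-S.val c)) (fun w => if w ∈ S.pid (-j) then S.ψ (A - c * w) else 0) ∧
    ∫ w, (if w ∈ S.pid (-j) then S.ψ (A - c * w) else 0) ∂S.μ =
      if c ∈ S.pid j then (S.q : ℂ) ^ j * S.ψ A else 0 := by
  have hlev : S.Lev1 (-j) (max (-j) (-S.val c))
      (fun w => if w ∈ S.pid (-j) then S.ψ (A - c * w) else 0) := by
    refine ⟨fun w hw => by by_contra h; simp [h] at hw, fun w h hh => ?_⟩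
    have h1 : w + h ∈ S.pid (-j) ↔ w ∈ S.pid (-j) :=
      S.mem_pid_congr (by simpa using S.pid_mono (le_max_left _ _) hh)
    have h2 : S.ψ (A - c * (w + h)) = S.ψ (A - c * w) := by
      apply S.psi_congr
      rw [show A - c * (w + h) - (A - c * w) = -(c * h) by ring]
      apply S.neg_mem_pid
      by_cases hc : c = 0
      · simp [hc, S.zero_mem_pid]
      · rw [S.mul_mem_pid_iff hc]
        exact S.pid_mono (by omega) hh
    simp only [h1, h2]
  refine ⟨hlev, ?_⟩
  by_cases hc : c ∈ S.pid j
  · have h1 : (fun w => if w ∈ S.pid (-j) then S.ψ (A - c * w) else 0) =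
        fun w => (S.coset 0 (-j)).indicator (fun _ => S.ψ A) w := by
      funext w
      rw [S.coset_zero, Set.indicator_apply]
      split_ifs with hw
      · apply S.psi_congr
        rw [show A - c * w - A = -(c * w) by ring]
        apply S.neg_mem_pid
        simpa using S.mul_mem_pid hc hw
      · rfl
    rw [h1, (integral_coset_const hA 0 (-j) (S.ψ A)).2, if_pos hc, neg_neg]
  · rw [if_neg hc]
    have hc0 : c ≠ 0 := fun h => hc (h ▸ S.zero_mem_pid j)
    -- The character `w ↦ ψ(cw)` is nontrivial on `𝔭^{-j}`, at `x₀ / c`.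
    obtain ⟨x₀, hx₀, hx1, hx2⟩ := S.psi_nontrivial
    set w₀ := c⁻¹ * x₀ with hw₀
    have hcw : c * w₀ = x₀ := by rw [hw₀, mul_inv_cancel_left₀ hc0]
    have hmem : w₀ ∈ S.pid (-j) := by
      rw [S.mem_pid_iff (by simp [hw₀, hc0, hx₀]), hw₀,
        S.val_mul _ _ (inv_ne_zero hc0) hx₀, S.val_inv' hc0]
      rw [S.mem_pid_iff hc0] at hc
      omega
    have h1 := integral_translate hA hlev (-w₀)
    have h2 : ∀ w, (if w + -w₀ ∈ S.pid (-j) then S.ψ (A - c * (w + -w₀)) else 0) =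
        S.ψ x₀ * (if w ∈ S.pid (-j) then S.ψ (A - c * w) else 0) := by
      intro w
      have h3 : w + -w₀ ∈ S.pid (-j) ↔ w ∈ S.pid (-j) :=
        S.mem_pid_congr (by simpa using S.neg_mem_pid hmem)
      rw [show A - c * (w + -w₀) = x₀ + (A - c * w) by rw [← hcw]; ring, S.psi_add]
      simp only [h3, mul_ite, mul_zero]
    simp only [h2] at h1
    rw [integral_const_mul] at h1
    have h4 : (S.ψ x₀ - 1) * ∫ w, (if w ∈ S.pid (-j) then S.ψ (A - c * w) else 0) ∂S.μ = 0 := by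
      rw [sub_mul, h1, one_mul, sub_self]
    exact (mul_eq_zero.1 h4).resolve_left (sub_ne_zero.2 hx2)

lemma integral_affine_fourier (hA : S.BallsMeasurable) (j : ℤ) (A c : F) {e : F} (he : e ≠ 0)
    (d : F) :
    ∫ w, (if e * w + d ∈ S.pid (-j) then S.ψ (A - c * (e * w + d)) else 0) ∂S.μ =
      (S.q : ℂ) ^ S.val e * if c ∈ S.pid j then (S.q : ℂ) ^ j * S.ψ A else 0 := by
  rw [← (integral_fourier hA j A c).2]
  exact integral_affine hA (integral_fourier hA j A c).1 he d

/-! ### The residue characteristic -/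

/-- The residue field has `q` elements. -/
lemma card_reps (hA : S.BallsMeasurable) {Z : Finset F} (hZ : S.IsReps 0 1 Z) : Z.card = S.q := by
  have h1 := integral_coset_const hA 0 0 1
  have hlev : S.Lev1 0 1 ((S.coset 0 0).indicator fun _ => 1) := by
    rw [S.coset_zero]
    refine ⟨fun x hx => by by_contra h; simp [h] at hx, fun x h hh => ?_⟩
    have : x + h ∈ S.pid 0 ↔ x ∈ S.pid 0 :=
      S.mem_pid_congr (by simpa using S.pid_mono zero_le_one hh)
    simp only [Set.indicator_apply, this]
  have h2 := integral_eq_sum hA hlev zero_le_one hZ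
  rw [h1.2, S.coset_zero, Finset.sum_congr rfl
    (fun z hz => Set.indicator_of_mem (hZ.1 z hz) (fun _ => (1 : ℂ)))] at h2
  have hq := S.q_ne_zero
  simp only [neg_zero, zpow_zero, mul_one, Finset.sum_const, nsmul_eq_mul, zpow_neg, zpow_one] at h2
  field_simp at h2
  exact_mod_cast h2.symm

/-- Translation by `1` permutes the classes of `O` modulo `𝔭`; comparing the sums of the
representatives before and after gives `q ∈ 𝔭`. -/
lemma q_mem_pid (hA : S.BallsMeasurable) : (S.q : F) ∈ S.pid 1 := by
  obtain ⟨Z, hZ⟩ := hA.exists_reps (show (0 : ℤ) ≤ 1 by norm_num)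
  have hZ' := hZ.translate S S.one_mem_pid
  choose! σ hσ hσu using fun z (hz : z ∈ S.pid 0) => hZ'.2 z hz
  have hsum : ∀ W : Finset F, (∀ z ∈ W, z ∈ Z) → ∑ z ∈ W, (z - σ z) ∈ S.pid 1 := by
    intro W
    induction W using Finset.induction_on with
    | empty => intro _; simpa using S.zero_mem_pid 1
    | insert z W hz ih =>
      intro h
      rw [Finset.sum_insert hz]
      exact S.add_mem_pid (hσ z (hZ.1 z (h z (Finset.mem_insert_self _ _)))).2
        (ih fun w hw => h w (Finset.mem_insert_of_mem hw))
  have hbij : ∑ z ∈ Z, σ z = ∑ w ∈ Z.image (· + 1), w := by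
    refine Finset.sum_bij (fun z _ => σ z) (fun z hz => (hσ z (hZ.1 z hz)).1) ?_ ?_
      (fun _ _ => rfl)
    · intro z hz w hw h
      obtain ⟨u, hu, huu⟩ := hZ.2 z (hZ.1 z hz)
      rw [huu z ⟨hz, by simpa using S.zero_mem_pid 1⟩]
      refine (huu w ⟨hw, ?_⟩).symm
      convert S.sub_mem_pid (hσ z (hZ.1 z hz)).2 (hσ w (hZ.1 w hw)).2 using 1
      rw [h]; ring
    · intro w hw
      obtain ⟨z, ⟨hz, hzw⟩, -⟩ := hZ.2 w (hZ'.1 w hw)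
      refine ⟨z, hz, (hσu z (hZ.1 z hz) w ⟨hw, ?_⟩).symm⟩
      rw [← neg_sub]; exact S.neg_mem_pid hzw
  have h1 := hsum Z fun z hz => hz
  rw [Finset.sum_sub_distrib, hbij, Finset.sum_image (by simp), Finset.sum_add_distrib] at h1
  simp only [Finset.sum_const, nsmul_eq_mul, mul_one, card_reps hA hZ] at h1
  simpa using S.neg_mem_pid h1

lemma six_notMem_pid (hA : S.BallsMeasurable) : (6 : F) ∉ S.pid 1 := by
  intro h6
  obtain ⟨p, f, hp, h3, hf, hq⟩ := S.residue_char
  have hcop : Nat.Coprime S.q 6 := by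
    rw [hq]
    apply Nat.Coprime.pow_left
    rw [show 6 = 2 * 3 from rfl]
    exact Nat.Coprime.mul_right
      ((Nat.coprime_primes hp Nat.prime_two).2 (by omega))
      ((Nat.coprime_primes hp Nat.prime_three).2 (by omega))
  obtain ⟨u, v, huv⟩ := Nat.isCoprime_iff_coprime.2 hcop
  have h1 : (u : F) * S.q + v * 6 = 1 := by exact_mod_cast congrArg (Int.cast : ℤ → F) huv
  have h2 : (1 : F) ∈ S.pid 1 := by
    rw [← h1]
    have ha := S.mul_mem_pid (S.intCast_mem_pid u) (q_mem_pid hA)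
    have hb := S.mul_mem_pid (S.intCast_mem_pid v) h6
    rw [zero_add] at ha hb
    exact S.add_mem_pid ha hb
  rw [S.mem_pid_iff one_ne_zero, S.val_one'] at h2
  omega

lemma two_three (hA : S.BallsMeasurable) :
    (2 : F) ≠ 0 ∧ S.val 2 = 0 ∧ (3 : F) ≠ 0 ∧ S.val 3 = 0 := by
  have h6 := six_notMem_pid hA
  rw [show (6 : F) = 2 * 3 by norm_num] at h6
  have h2 : (2 : F) ≠ 0 := fun h => h6 (by simp [h, S.zero_mem_pid])
  have h3 : (3 : F) ≠ 0 := fun h => h6 (by simp [h, S.zero_mem_pid])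
  have i2 : (2 : F) ∈ S.pid 0 := by exact_mod_cast S.natCast_mem_pid 2
  have i3 : (3 : F) ∈ S.pid 0 := by exact_mod_cast S.natCast_mem_pid 3
  rw [S.mem_pid_iff h2] at i2
  rw [S.mem_pid_iff h3] at i3
  rw [S.mem_pid_iff (mul_ne_zero h2 h3), S.val_mul _ _ h2 h3] at h6
  exact ⟨h2, by omega, h3, by omega⟩

/-- `1 + 2ρ = ρ - ρ²` is a unit, being a square root of `-3`. -/
lemma unit_one_add_two_rho (hA : S.BallsMeasurable) :
    1 + 2 * S.ρ ≠ 0 ∧ S.val (1 + 2 * S.ρ) = 0 := by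
  obtain ⟨-, -, h3, v3⟩ := two_three hA
  have hsq : (1 + 2 * S.ρ) * (1 + 2 * S.ρ) = -3 := by
    linear_combination 4 * S.rho_prim_cubic
  have h0 : 1 + 2 * S.ρ ≠ 0 := fun h => by
    rw [h, mul_zero] at hsq
    exact h3 (neg_eq_zero.1 hsq.symm)
  have := S.val_mul _ _ h0 h0
  rw [hsq, S.val_neg', v3] at this
  exact ⟨h0, by omega⟩

/-! ### The four-variable integrand and its level -/

/-- `x` and `x'` lie in `𝔭^{-B}` and are congruent modulo `𝔭^{ℓ-B}`. Sums and products add the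
losses `B`, so that a polynomial expression is controlled by its number of factors. -/
def Near (S : CubicSetup F) (ℓ B : ℤ) (x x' : F) : Prop :=
  0 ≤ B ∧ x ∈ S.pid (-B) ∧ x' ∈ S.pid (-B) ∧ x - x' ∈ S.pid (ℓ - B)

lemma Near.const (ℓ : ℤ) {c : F} (hc : c ∈ S.pid 0) : S.Near ℓ 0 c c :=
  ⟨le_rfl, by simpa using hc, by simpa using hc, by simpa using S.zero_mem_pid _⟩

lemma Near.add {ℓ B C : ℤ} {x x' y y' : F} (h : S.Near ℓ B x x') (k : S.Near ℓ C y y') :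
    S.Near ℓ (B + C) (x + y) (x' + y') := by
  obtain ⟨h0, h1, h2, h3⟩ := h
  obtain ⟨k0, k1, k2, k3⟩ := k
  refine ⟨by omega, S.add_mem_pid (S.pid_mono (by omega) h1) (S.pid_mono (by omega) k1),
    S.add_mem_pid (S.pid_mono (by omega) h2) (S.pid_mono (by omega) k2), ?_⟩
  rw [add_sub_add_comm]
  exact S.add_mem_pid (S.pid_mono (by omega) h3) (S.pid_mono (by omega) k3)

lemma Near.neg {ℓ B : ℤ} {x x' : F} (h : S.Near ℓ B x x') : S.Near ℓ B (-x) (-x') := by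
  obtain ⟨h0, h1, h2, h3⟩ := h
  refine ⟨h0, S.neg_mem_pid h1, S.neg_mem_pid h2, ?_⟩
  convert S.neg_mem_pid h3 using 1
  ring

lemma Near.sub {ℓ B C : ℤ} {x x' y y' : F} (h : S.Near ℓ B x x') (k : S.Near ℓ C y y') :
    S.Near ℓ (B + C) (x - y) (x' - y') := by
  rw [sub_eq_add_neg, sub_eq_add_neg]; exact h.add k.neg

lemma Near.mul {ℓ B C : ℤ} {x x' y y' : F} (h : S.Near ℓ B x x') (k : S.Near ℓ C y y') :
    S.Near ℓ (B + C) (x * y) (x' * y') := by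
  obtain ⟨h0, h1, h2, h3⟩ := h
  obtain ⟨k0, k1, k2, k3⟩ := k
  refine ⟨by omega, S.pid_mono (by omega) (S.mul_mem_pid h1 k1),
    S.pid_mono (by omega) (S.mul_mem_pid h2 k2), ?_⟩
  rw [show x * y - x' * y' = x * (y - y') + (x - x') * y' by ring]
  exact S.add_mem_pid (S.pid_mono (by omega) (S.mul_mem_pid h1 k3))
    (S.pid_mono (by omega) (S.mul_mem_pid h3 k2))

lemma Near.sq {ℓ B : ℤ} {x x' : F} (h : S.Near ℓ B x x') :
    S.Near ℓ (B + B) (x ^ 2) (x' ^ 2) := by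
  rw [pow_two, pow_two]; exact h.mul h

lemma Near.mem_iff {ℓ B k : ℤ} {x x' : F} (h : S.Near ℓ B x x') (hk : k ≤ ℓ - B) :
    x ∈ S.pid k ↔ x' ∈ S.pid k :=
  S.mem_pid_congr (S.pid_mono hk h.2.2.2)

/-- Multiplication by a unit does not change membership in `𝔭^k`. -/
lemma unit_mul_mem {u : F} (hu : u ≠ 0) (hv : S.val u = 0) (x : F) (k : ℤ) :
    u * x ∈ S.pid k ↔ x ∈ S.pid k := by
  rw [S.mul_mem_pid_iff hu, hv, sub_zero]

variable (S) in
/-- The integrand of `I(j;a,b)`. -/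
def kern (j : ℤ) (a b z y x s : F) : ℂ :=
  if x + a * s ∈ S.pid (-j) ∧ y - b * s ∈ S.pid (-j) ∧
      (x * b + y * S.ρ ^ 2 * a) * s - (x * y + z * S.ρ) ∈ S.pid (-j) ∧
      x * b + y * S.ρ ^ 2 * a ∈ S.pid j
    then S.ψ (x + y + 2 * a * S.ρ ^ 2 * x * y ^ 2 -
        (2 * S.ρ * b * x + 2 * S.ρ ^ 2 * a * y) * z)
    else 0

/-- The four conditions bound all variables: `bx + ay` and `bx + ρ²ay` are integral, hence so
are `ay` and `bx`, and then `s` and `z` are bounded as well. -/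
lemma kern_support (hA : S.BallsMeasurable) {a b : F} (ha : a ≠ 0) (hb : b ≠ 0) {j : ℤ}
    (hj0 : 0 ≤ j) (hja : j ≤ S.val a) (hjb : j ≤ S.val b) (z y x s : F)
    (h : S.kern j a b z y x s ≠ 0) :
    z ∈ S.pid (-(S.val a + S.val b)) ∧ y ∈ S.pid (-(S.val a + S.val b)) ∧
      x ∈ S.pid (-(S.val a + S.val b)) ∧ s ∈ S.pid (-(S.val a + S.val b)) := by
  obtain ⟨u0, uv⟩ := unit_one_add_two_rho hA
  have ham : a ∈ S.pid (S.val a) := Or.inr le_rfl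
  have hbm : b ∈ S.pid (S.val b) := Or.inr le_rfl
  obtain ⟨c1, c2, c3, c4⟩ : x + a * s ∈ S.pid (-j) ∧ y - b * s ∈ S.pid (-j) ∧
      (x * b + y * S.ρ ^ 2 * a) * s - (x * y + z * S.ρ) ∈ S.pid (-j) ∧
      x * b + y * S.ρ ^ 2 * a ∈ S.pid j := by
    by_contra hc
    exact h (if_neg hc)
  have hr2 : S.ρ ^ 2 ∈ S.pid 0 := by
    rw [pow_two]; exact S.mul_mem_pid S.rho_mem_pid S.rho_mem_pid
  have e1 : b * x + a * y ∈ S.pid 0 := by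
    rw [show b * x + a * y = b * (x + a * s) + a * (y - b * s) by ring]
    exact S.add_mem_pid (S.pid_mono (by omega) (S.mul_mem_pid hbm c1))
      (S.pid_mono (by omega) (S.mul_mem_pid ham c2))
  have e2 : a * y ∈ S.pid 0 := by
    rw [← unit_mul_mem u0 uv, show (1 + 2 * S.ρ) * (a * y) =
      -(S.ρ ^ 2 * ((b * x + a * y) - (x * b + y * S.ρ ^ 2 * a))) by
        linear_combination (a * y * (1 - S.ρ ^ 2 + S.ρ)) * S.rho_prim_cubic]
    exact S.neg_mem_pid (S.mul_mem_pid hr2 (S.sub_mem_pid e1 (S.pid_mono hj0 c4)))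
  have e3 : b * x ∈ S.pid 0 := by simpa using S.sub_mem_pid e1 e2
  have hy : y ∈ S.pid (-S.val a) := by
    simpa using (S.mul_mem_pid_iff ha y 0).1 e2
  have hx : x ∈ S.pid (-S.val b) := by
    simpa using (S.mul_mem_pid_iff hb x 0).1 e3
  have hs : s ∈ S.pid (-(S.val a + S.val b)) := by
    have h1 : a * s ∈ S.pid (-S.val b) := by
      rw [show a * s = (x + a * s) - x by ring]
      exact S.sub_mem_pid (S.pid_mono (by omega) c1) hx
    exact S.pid_mono (by omega) ((S.mul_mem_pid_iff ha s _).1 h1)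
  refine ⟨?_, S.pid_mono (by omega) hy, S.pid_mono (by omega) hx, hs⟩
  rw [← unit_mul_mem S.rho_ne_zero S.val_rho, show S.ρ * z = (x * b + y * S.ρ ^ 2 * a) * s - x * y -
    ((x * b + y * S.ρ ^ 2 * a) * s - (x * y + z * S.ρ)) by ring]
  exact S.sub_mem_pid (S.sub_mem_pid (S.pid_mono (by omega) (S.mul_mem_pid c4 hs))
    (S.pid_mono (by omega) (S.mul_mem_pid hx hy))) (S.pid_mono (by omega) c3)

/-- The integrand is locally constant. With `M = val a + val b`, all variables lie in `𝔭^{-M}` on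
its support, and the conditions and the phase are polynomials with integral coefficients, so each
loses a bounded multiple of `M` in precision; the factor `20` is a generous bound. -/
lemma kern_level (hA : S.BallsMeasurable) {a b : F} (ha : a ≠ 0) (hb : b ≠ 0) {j : ℤ}
    (hj0 : 0 ≤ j) (hja : j ≤ S.val a) (hjb : j ≤ S.val b) :
    S.Lev4 (-(S.val a + S.val b)) (20 * (S.val a + S.val b)) (S.kern j a b) := by
  have hsupp := kern_support hA ha hb hj0 hja hjb
  refine ⟨hsupp, ?_⟩
  set M := S.val a + S.val b with hM
  intro z y x s h₁ hh₁ h₂ hh₂ h₃ hh₃ h₄ hh₄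
  have shift : ∀ {u h : F}, h ∈ S.pid (20 * M) → (u + h ∈ S.pid (-M) ↔ u ∈ S.pid (-M)) := by
    intro u h hh
    refine S.mem_pid_congr (S.pid_mono ?_ (by simpa using hh))
    omega
  by_cases hbox : z ∈ S.pid (-M) ∧ y ∈ S.pid (-M) ∧ x ∈ S.pid (-M) ∧ s ∈ S.pid (-M)
  · obtain ⟨bz, bby, bx, bs⟩ := hbox
    have near : ∀ {u h : F}, u ∈ S.pid (-M) → h ∈ S.pid (20 * M) →
        S.Near (20 * M) M (u + h) u := by
      intro u h hu hh
      refine ⟨by omega, (shift hh).2 hu, hu, S.pid_mono ?_ (by simpa using hh)⟩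
      omega
    have nz := near bz hh₁
    have ny := near bby hh₂
    have nx := near bx hh₃
    have ns := near bs hh₄
    have nr : S.Near (20 * M) 0 S.ρ S.ρ := Near.const _ S.rho_mem_pid
    have na : S.Near (20 * M) 0 a a := Near.const _ (Or.inr (by omega))
    have nb : S.Near (20 * M) 0 b b := Near.const _ (Or.inr (by omega))
    have n2 : S.Near (20 * M) 0 (2 : F) 2 :=
      Near.const _ (by exact_mod_cast S.natCast_mem_pid 2)
    have n4 := (nx.mul nb).add ((ny.mul nr.sq).mul na)
    have i1 := (nx.add (na.mul ns)).mem_iff (k := -j) (by omega)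
    have i2 := (ny.sub (nb.mul ns)).mem_iff (k := -j) (by omega)
    have i3 := ((n4.mul ns).sub ((nx.mul ny).add (nz.mul nr))).mem_iff (k := -j) (by omega)
    have i4 := n4.mem_iff (k := j) (by omega)
    have np := ((nx.add ny).add ((((n2.mul na).mul nr.sq).mul nx).mul ny.sq)).sub
      (((((n2.mul nr).mul nb).mul nx).add (((n2.mul nr.sq).mul na).mul ny)).mul nz)
    have ip := S.psi_congr (S.pid_mono (k := 0) (by omega) np.2.2.2)
    simp only [kern, i1, i2, i3, i4, ip]
  · have hbox' : ¬ (z + h₁ ∈ S.pid (-M) ∧ y + h₂ ∈ S.pid (-M) ∧ x + h₃ ∈ S.pid (-M) ∧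
        s + h₄ ∈ S.pid (-M)) := by
      rwa [shift hh₁, shift hh₂, shift hh₃, shift hh₄]
    have k1 : S.kern j a b z y x s = 0 := by
      by_contra h; exact hbox (hsupp z y x s h)
    have k2 : S.kern j a b (z + h₁) (y + h₂) (x + h₃) (s + h₄) = 0 := by
      by_contra h; exact hbox' (hsupp _ _ _ _ h)
    rw [k1, k2]

/-! ### The integrations over `z` and `s` -/

/-- Substituting `w = (xb + yρ²a)s - xy - ρz ∈ 𝔭^{-j}` makes the phase linear in `w`, with
coefficient `2(bx + ρay)`. -/
lemma integral_z (hA : S.BallsMeasurable) (j : ℤ) (a b y x s : F) :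
    ∫ z, S.kern j a b z y x s ∂S.μ =
      if x + a * s ∈ S.pid (-j) ∧ y - b * s ∈ S.pid (-j) ∧ x * b + y * S.ρ ^ 2 * a ∈ S.pid j ∧
        -(2 * (b * x + S.ρ * a * y)) ∈ S.pid j
      then (S.q : ℂ) ^ j * S.ψ (x + y + 2 * a * S.ρ ^ 2 * x * y ^ 2 -
        2 * (b * x + S.ρ * a * y) * ((x * b + y * S.ρ ^ 2 * a) * s - x * y))
      else 0 := by
  by_cases hc : x + a * s ∈ S.pid (-j) ∧ y - b * s ∈ S.pid (-j) ∧
      x * b + y * S.ρ ^ 2 * a ∈ S.pid j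
  · have h1 := integral_affine_fourier hA j
      (x + y + 2 * a * S.ρ ^ 2 * x * y ^ 2 -
        2 * (b * x + S.ρ * a * y) * ((x * b + y * S.ρ ^ 2 * a) * s - x * y))
      (-(2 * (b * x + S.ρ * a * y))) (neg_ne_zero.2 S.rho_ne_zero)
      ((x * b + y * S.ρ ^ 2 * a) * s - x * y)
    rw [S.val_neg', S.val_rho, zpow_zero, one_mul] at h1
    simp only [hc, true_and, ← h1, kern, and_true]
    congr 1
    funext z
    rw [show (x * b + y * S.ρ ^ 2 * a) * s - (x * y + z * S.ρ) =
      -S.ρ * z + ((x * b + y * S.ρ ^ 2 * a) * s - x * y) by ring]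
    congr 2
    linear_combination (-2 * S.ρ * z * b * x + 2 * S.ρ * z * b * x) * S.rho_prim_cubic
  · have h1 : ∀ z, S.kern j a b z y x s = 0 := fun z =>
      if_neg fun h => hc ⟨h.1, h.2.1, h.2.2.2⟩
    rw [if_neg fun h => hc ⟨h.1, h.2.1, h.2.2.1⟩]
    simp [h1]

/-- Substituting `w = x + as ∈ 𝔭^{-j}` makes the phase linear in `w` with coefficient
`-2a⁻¹(b²x² - abxy + a²y²)`, leaving the cubic term `2a⁻¹b²x³`. As `b/a` is integral, the
condition on `y - bs` becomes one on `y + ba⁻¹x`. -/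
lemma integral_s (hA : S.BallsMeasurable) {a b : F} (ha : a ≠ 0)
    (hba : b * a⁻¹ ∈ S.pid 0) (j : ℤ) (y x : F) :
    ∫ s, (∫ z, S.kern j a b z y x s ∂S.μ) ∂S.μ =
      if y + b * a⁻¹ * x ∈ S.pid (-j) ∧ x * b + y * S.ρ ^ 2 * a ∈ S.pid j ∧
        -(2 * (b * x + S.ρ * a * y)) ∈ S.pid j ∧
        2 * a⁻¹ * (b ^ 2 * x ^ 2 - a * b * x * y + a ^ 2 * y ^ 2) ∈ S.pid j
      then (S.q : ℂ) ^ (2 * j + S.val a) * S.ψ (x + y + 2 * a⁻¹ * b ^ 2 * x ^ 3)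
      else 0 := by
  have hai := mul_inv_cancel₀ ha
  simp only [integral_z hA]
  have h1 := integral_affine_fourier hA j (x + y + 2 * a⁻¹ * b ^ 2 * x ^ 3)
    (2 * a⁻¹ * (b ^ 2 * x ^ 2 - a * b * x * y + a ^ 2 * y ^ 2)) ha x
  have h2 : ∀ s, (if x + a * s ∈ S.pid (-j) ∧ y - b * s ∈ S.pid (-j) ∧
        x * b + y * S.ρ ^ 2 * a ∈ S.pid j ∧ -(2 * (b * x + S.ρ * a * y)) ∈ S.pid j
      then (S.q : ℂ) ^ j * S.ψ (x + y + 2 * a * S.ρ ^ 2 * x * y ^ 2 -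
        2 * (b * x + S.ρ * a * y) * ((x * b + y * S.ρ ^ 2 * a) * s - x * y))
      else 0) =
      (if y + b * a⁻¹ * x ∈ S.pid (-j) ∧ x * b + y * S.ρ ^ 2 * a ∈ S.pid j ∧
        -(2 * (b * x + S.ρ * a * y)) ∈ S.pid j then (S.q : ℂ) ^ j else 0) *
      (if a * s + x ∈ S.pid (-j) then S.ψ (x + y + 2 * a⁻¹ * b ^ 2 * x ^ 3 -
        2 * a⁻¹ * (b ^ 2 * x ^ 2 - a * b * x * y + a ^ 2 * y ^ 2) * (a * s + x)) else 0) := by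
    intro s
    rw [add_comm (a * s) x]
    by_cases hs : x + a * s ∈ S.pid (-j)
    · have h3 : y - b * s ∈ S.pid (-j) ↔ y + b * a⁻¹ * x ∈ S.pid (-j) := by
        apply S.mem_pid_congr
        rw [show y - b * s - (y + b * a⁻¹ * x) = -(b * a⁻¹ * (x + a * s)) by
          linear_combination (b * s) * hai]
        simpa using S.neg_mem_pid (S.mul_mem_pid hba hs)
      rw [show x + y + 2 * a * S.ρ ^ 2 * x * y ^ 2 -
          2 * (b * x + S.ρ * a * y) * ((x * b + y * S.ρ ^ 2 * a) * s - x * y) =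
        x + y + 2 * a⁻¹ * b ^ 2 * x ^ 3 -
          2 * a⁻¹ * (b ^ 2 * x ^ 2 - a * b * x * y + a ^ 2 * y ^ 2) * (x + a * s) by
        linear_combination (2 * a * x * y ^ 2 - 2 * s * a * b * x * y -
            2 * s * (S.ρ - 1) * a ^ 2 * y ^ 2) * S.rho_prim_cubic -
          (-2 * (b ^ 2 * x ^ 2 - a * b * x * y + a ^ 2 * y ^ 2) * s + 2 * b * x ^ 2 * y -
            2 * a * x * y ^ 2) * hai]
      simp only [hs, h3, true_and, if_true, ite_mul, zero_mul]
    · simp [hs]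
  simp only [h2]
  rw [integral_const_mul, h1]
  by_cases hQ : y + b * a⁻¹ * x ∈ S.pid (-j) ∧ x * b + y * S.ρ ^ 2 * a ∈ S.pid j ∧
        -(2 * (b * x + S.ρ * a * y)) ∈ S.pid j
  · rw [if_pos hQ]
    simp only [hQ, true_and]
    split_ifs
    · rw [show 2 * j + S.val a = j + j + S.val a by ring, zpow_add₀ S.q_ne_zero,
        zpow_add₀ S.q_ne_zero]; ring
    · ring
  · rw [if_neg hQ, zero_mul, if_neg (fun h => hQ ⟨h.1, h.2.1, h.2.2.1⟩)]

/-! ### The substitution in `y` -/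

/-- Under `y = -(1+2ρ)y' - ρa⁻¹bx` the forms `bx + ρ²ay`, `bx + ρay` and `bx + ay` become unit
multiples of `ay'`, `bx + ay'` and `bx - ρay'`, which turns the domain into `D_j(a,b)`. -/
lemma integral_s_subst (hA : S.BallsMeasurable) {a b : F} (ha : a ≠ 0)
    (hba : b * a⁻¹ ∈ S.pid 0) (j : ℤ) (y x : F) :
    ∫ s, (∫ z, S.kern j a b z (-(1 + 2 * S.ρ) * y + -(S.ρ * (b * a⁻¹)) * x) x s ∂S.μ) ∂S.μ =
      (S.q : ℂ) ^ (2 * j + S.val a) *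
        (if (x, y) ∈ S.Dset j a b
          then S.ψ ((1 - S.ρ * a⁻¹ * b) * x - (1 + 2 * S.ρ) * y + 2 * a⁻¹ * b ^ 2 * x ^ 3)
          else 0) := by
  have hai := mul_inv_cancel₀ ha
  have hr := S.rho_prim_cubic
  obtain ⟨u0, uv⟩ := unit_one_add_two_rho hA
  obtain ⟨t0, tv, th0, thv⟩ := two_three hA
  have hr0 := S.rho_ne_zero
  have hrv := S.val_rho
  rw [integral_s hA ha hba]
  set Y := -(1 + 2 * S.ρ) * y + -(S.ρ * (b * a⁻¹)) * x with hY
  have i1 : Y + b * a⁻¹ * x ∈ S.pid (-j) ↔ a⁻¹ * (b * x - S.ρ * a * y) ∈ S.pid (-j) := by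
    rw [show Y + b * a⁻¹ * x =
        S.ρ * (S.ρ * ((1 + 2 * S.ρ) * (a⁻¹ * (b * x - S.ρ * a * y)))) by
      rw [hY]
      linear_combination (b * a⁻¹ * x * (1 - 2 * S.ρ) + y * (1 + 2 * S.ρ) * (S.ρ - 1)) * hr +
        S.ρ ^ 3 * (1 + 2 * S.ρ) * y * hai,
      unit_mul_mem hr0 hrv, unit_mul_mem hr0 hrv, unit_mul_mem u0 uv]
  have i2 : x * b + Y * S.ρ ^ 2 * a ∈ S.pid j ↔ a * y ∈ S.pid j := by
    rw [show x * b + Y * S.ρ ^ 2 * a = -S.ρ * (S.ρ * ((1 + 2 * S.ρ) * (a * y))) by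
      rw [hY]
      linear_combination (-(S.ρ - 1) * b * x) * hr - S.ρ ^ 3 * b * x * hai,
      unit_mul_mem (neg_ne_zero.2 hr0) (by rw [S.val_neg', hrv]), unit_mul_mem hr0 hrv,
      unit_mul_mem u0 uv]
  have i3 : -(2 * (b * x + S.ρ * a * Y)) ∈ S.pid j ↔ b * x + a * y ∈ S.pid j := by
    rw [show -(2 * (b * x + S.ρ * a * Y)) =
        2 * (S.ρ * ((1 + 2 * S.ρ) * (b * x + a * y))) by
      rw [hY]
      linear_combination -2 * b * x * hr + 2 * S.ρ ^ 2 * b * x * hai,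
      unit_mul_mem t0 tv, unit_mul_mem hr0 hrv, unit_mul_mem u0 uv]
  have i4 : 2 * a⁻¹ * (b ^ 2 * x ^ 2 - a * b * x * Y + a ^ 2 * Y ^ 2) ∈ S.pid j ↔
      y * (b * x + a * y) ∈ S.pid j := by
    have p : b * x + S.ρ * a * Y = -S.ρ * (1 + 2 * S.ρ) * (b * x + a * y) := by
      rw [hY]
      linear_combination b * x * hr - S.ρ ^ 2 * b * x * hai
    have q : x * b + Y * S.ρ ^ 2 * a = -S.ρ ^ 2 * (1 + 2 * S.ρ) * (a * y) := by
      rw [hY]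
      linear_combination (-(S.ρ - 1) * b * x) * hr - S.ρ ^ 3 * b * x * hai
    have N : b ^ 2 * x ^ 2 - a * b * x * Y + a ^ 2 * Y ^ 2 =
        (b * x + S.ρ * a * Y) * (x * b + Y * S.ρ ^ 2 * a) := by
      linear_combination -(a * b * x * Y + (S.ρ - 1) * a ^ 2 * Y ^ 2) * hr
    have c : S.ρ ^ 3 * (1 + 2 * S.ρ) ^ 2 = -3 := by
      rw [S.rho_cube]
      linear_combination 4 * hr
    rw [N, p, q, show 2 * a⁻¹ * (-S.ρ * (1 + 2 * S.ρ) * (b * x + a * y) *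
        (-S.ρ ^ 2 * (1 + 2 * S.ρ) * (a * y))) = 2 * (-3 * (y * (b * x + a * y))) by
      linear_combination 2 * a⁻¹ * a * y * (b * x + a * y) * c - 6 * y * (b * x + a * y) * hai,
      unit_mul_mem t0 tv, unit_mul_mem (neg_ne_zero.2 th0) (by rw [S.val_neg', thv])]
  have i5 : x + Y + 2 * a⁻¹ * b ^ 2 * x ^ 3 =
      (1 - S.ρ * a⁻¹ * b) * x - (1 + 2 * S.ρ) * y + 2 * a⁻¹ * b ^ 2 * x ^ 3 := by
    rw [hY]; ring
  have i6 : (Y + b * a⁻¹ * x ∈ S.pid (-j) ∧ x * b + Y * S.ρ ^ 2 * a ∈ S.pid j ∧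
        -(2 * (b * x + S.ρ * a * Y)) ∈ S.pid j ∧
        2 * a⁻¹ * (b ^ 2 * x ^ 2 - a * b * x * Y + a ^ 2 * Y ^ 2) ∈ S.pid j) ↔
      (x, y) ∈ S.Dset j a b := by
    rw [i1, i2, i3, i4]
    change _ ↔ (_ ∧ _ ∧ _ ∧ _)
    constructor
    · rintro ⟨k1, k2, k3, k4⟩
      exact ⟨k1, by simpa using S.sub_mem_pid k3 k2, k2, k4⟩
    · rintro ⟨k1, k2, k3, k4⟩
      exact ⟨k1, k3, S.add_mem_pid k2 k3, k4⟩
  simp only [i6, i5, mul_ite, mul_zero]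

/-! ### Non-measurable balls -/

/-- A system of homogeneous linear conditions in one variable, one of them nontrivial, cuts out
a ball. -/
lemma ball_and {P : F → Prop} (hP : ∃ k, ∀ h, P h ↔ h ∈ S.pid k) (c : F) (m : ℤ) :
    ∃ k, ∀ h, (P h ∧ c * h ∈ S.pid m) ↔ h ∈ S.pid k := by
  obtain ⟨k, hk⟩ := hP
  by_cases hc : c = 0
  · exact ⟨k, fun h => by simp [hk, hc, S.zero_mem_pid]⟩
  · refine ⟨max k (m - S.val c), fun h => ?_⟩
    rw [hk, S.mul_mem_pid_iff hc]
    constructor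
    · rintro ⟨h1, h2⟩
      rcases max_choice k (m - S.val c) with h | h <;> rwa [h]
    · intro h1
      exact ⟨S.pid_mono (le_max_left _ _) h1, S.pid_mono (le_max_right _ _) h1⟩

lemma ball_base {c : F} (hc : c ≠ 0) (m : ℤ) : ∃ k, ∀ h, c * h ∈ S.pid m ↔ h ∈ S.pid k :=
  ⟨_, fun h => S.mul_mem_pid_iff hc h m⟩

lemma kern_integral_eq_zero (hB : ¬ S.BallsMeasurable) {a : F} (ha : a ≠ 0) (b : F) (j : ℤ)
    (z y x : F) : ∫ s, S.kern j a b z y x s ∂S.μ = 0 := by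
  unfold kern
  refine S.integral_eq_zero_of_not hB (fun s => x + a * s ∈ S.pid (-j) ∧ y - b * s ∈ S.pid (-j) ∧
      (x * b + y * S.ρ ^ 2 * a) * s - (x * y + z * S.ρ) ∈ S.pid (-j) ∧
      x * b + y * S.ρ ^ 2 * a ∈ S.pid j) (fun _ => x + y + 2 * a * S.ρ ^ 2 * x * y ^ 2 -
        (2 * S.ρ * b * x + 2 * S.ρ ^ 2 * a * y) * z) ?_
  rintro c ⟨c1, c2, c3, c4⟩
  obtain ⟨k, hk⟩ := ball_and (ball_and (ball_base ha (-j)) (-b) (-j))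
    (x * b + y * S.ρ ^ 2 * a) (-j)
  refine ⟨k, fun s => ?_⟩
  rw [← hk, S.mem_pid_congr (x := x + a * s) (y := a * (s - c))
      (by convert c1 using 1; ring),
    S.mem_pid_congr (x := y - b * s) (y := -b * (s - c)) (by convert c2 using 1; ring),
    S.mem_pid_congr (x := (x * b + y * S.ρ ^ 2 * a) * s - (x * y + z * S.ρ))
      (y := (x * b + y * S.ρ ^ 2 * a) * (s - c)) (by convert c3 using 1; ring)]
  tauto

lemma Dset_integral_eq_zero (hB : ¬ S.BallsMeasurable) (a : F) {b : F} (hb : b ≠ 0) (j : ℤ)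
    (y : F) (g : F → F) :
    ∫ x, (if (x, y) ∈ S.Dset j a b then S.ψ (g x) else 0) ∂S.μ = 0 := by
  refine S.integral_eq_zero_of_not hB (fun x => (x, y) ∈ S.Dset j a b) g ?_
  rintro c ⟨c1, c2, c3, c4⟩
  obtain ⟨k, hk⟩ := ball_and (ball_and (ball_base hb j) (a⁻¹ * b) (-j)) (y * b) j
  refine ⟨k, fun x => ?_⟩
  rw [← hk, Dset, Set.mem_ofPred_eq,
    S.mem_pid_congr (x := a⁻¹ * (b * x - S.ρ * a * y)) (y := a⁻¹ * b * (x - c))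
      (by convert c1 using 1; ring),
    S.mem_pid_congr (x := b * x) (y := b * (x - c)) (by convert c2 using 1; ring),
    S.mem_pid_congr (x := y * (b * x + a * y)) (y := y * b * (x - c))
      (by convert c4 using 1; ring)]
  have c3' : a * y ∈ S.pid j := c3
  simp only [c3', true_and]
  tauto

end Lemmas

/-- Simplification of `I(j;a,b)` for `|b| ≤ |a| ≤ 1`. -/
theorem statement4 (a b : F) (ha : a ≠ 0) (hb : b ≠ 0)
    (h1 : S.A b ≤ S.A a) (h2 : S.A a ≤ 1) (j : ℤ) (hj0 : 0 ≤ j)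
    (hj : j ≤ min (S.val a) (S.val b)) :
    S.Ij j a b = ((S.A a : ℂ))⁻¹ *
      ∫ y, (∫ x,
        (if (x, y) ∈ S.Dset j a b
          then S.ψ ((1 - S.ρ * a⁻¹ * b) * x - (1 + 2 * S.ρ) * y + 2 * a⁻¹ * b ^ 2 * x ^ 3)
          else 0) ∂S.μ) ∂S.μ := by
  have hq1 : (1 : ℝ) < S.q := by exact_mod_cast S.one_lt_q
  have hab : S.val a ≤ S.val b := by
    rw [A, A, if_neg ha, if_neg hb, zpow_le_zpow_iff_right₀ hq1] at h1
    omega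
  have hja : j ≤ S.val a := hj.trans (min_le_left _ _)
  have hjb : j ≤ S.val b := hj.trans (min_le_right _ _)
  have hba : b * a⁻¹ ∈ S.pid 0 := by
    rw [S.mem_pid_iff (mul_ne_zero hb (inv_ne_zero ha)), S.val_mul _ _ hb (inv_ne_zero ha),
      S.val_inv' ha]
    omega
  change (S.q : ℂ) ^ (-(2 * j)) *
    ∫ z, (∫ y, (∫ x, (∫ s, S.kern j a b z y x s ∂S.μ) ∂S.μ) ∂S.μ) ∂S.μ = _
  by_cases hA : S.BallsMeasurable
  · have hK := kern_level hA ha hb hj0 hja hjb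
    set L := -(S.val a + S.val b) with hL
    set ℓ := 20 * (S.val a + S.val b) with hℓ
    have hLℓ : L ≤ ℓ := by omega
    rw [integral_outer_to_inner hA hK hLℓ]
    have hG := hK.integrate'
    set G : F → F → ℂ := fun y x => ∫ s, (∫ z, S.kern j a b z y x s ∂S.μ) ∂S.μ with hGdef
    obtain ⟨u0, uv⟩ := unit_one_add_two_rho hA
    have um : 1 + 2 * S.ρ ∈ S.pid 0 := Or.inr uv.ge
    set v := -(S.ρ * (b * a⁻¹)) with hv
    have vm : v ∈ S.pid 0 := S.neg_mem_pid (by simpa using S.mul_mem_pid S.rho_mem_pid hba)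
    -- The substitution has integral coefficients and unit determinant, so it preserves levels.
    have hG' : S.Lev2 L ℓ (fun y x => G (-(1 + 2 * S.ρ) * y + v * x) x) := by
      refine ⟨fun y x hne => ?_, fun y x h hh k hk => ?_⟩
      · obtain ⟨k1, k2⟩ := hG.1 _ _ hne
        refine ⟨?_, k2⟩
        have k3 := S.sub_mem_pid k1 (show v * x ∈ S.pid L by simpa using S.mul_mem_pid vm k2)
        rwa [add_sub_cancel_right,
          unit_mul_mem (neg_ne_zero.2 u0) (by rw [S.val_neg', uv])] at k3
      · change G (-(1 + 2 * S.ρ) * (y + h) + v * (x + k)) (x + k) = _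
        rw [show -(1 + 2 * S.ρ) * (y + h) + v * (x + k) =
          -(1 + 2 * S.ρ) * y + v * x + (-(1 + 2 * S.ρ) * h + v * k) by ring]
        refine hG.2 _ _ _ (S.add_mem_pid ?_ ?_) _ hk
        · simpa using S.mul_mem_pid (S.neg_mem_pid um) hh
        · simpa using S.mul_mem_pid vm hk
    have hsub : ∫ y, (∫ x, G y x ∂S.μ) ∂S.μ =
        ∫ y, (∫ x, G (-(1 + 2 * S.ρ) * y + v * x) x ∂S.μ) ∂S.μ := by
      rw [integral_swap hA hG hLℓ, integral_swap hA hG' hLℓ]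
      congr 1
      funext x
      rw [integral_affine hA (hG.left x) (neg_ne_zero.2 u0) (v * x), S.val_neg', uv, zpow_zero,
        one_mul]
    have hAa : ((S.A a : ℂ))⁻¹ = (S.q : ℂ) ^ S.val a := by
      rw [A, if_neg ha]; push_cast; rw [zpow_neg, inv_inv]
    change (S.q : ℂ) ^ (-(2 * j)) * ∫ y, (∫ x, G y x ∂S.μ) ∂S.μ = _
    rw [hsub, hAa]
    simp only [hGdef, hv, integral_s_subst hA ha hba, integral_const_mul]
    rw [← mul_assoc, ← zpow_add₀ S.q_ne_zero]
    congr 2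
    ring
  -- Every innermost integrand is zero or non-measurable here, so both sides are `0`.
  · simp only [kern_integral_eq_zero hA ha, Dset_integral_eq_zero hA a hb, integral_zero, mul_zero]

end CubicSetup
end
end

section
/- Every ξ ∈ (F²)⁴ with d₁(ξ) = 0 and d_{1,2}(ξ) = d_{1,2,3,4}(ξ) = 1 lies in the H-orbit of (0, e₂, αe₂, 0) for some α ∈ F. For α, α′ ∈ F, the elements (0, e₂, αe₂, 0) and (0, e₂, α′e₂, 0) lie in the same H-orbit if and only if α = α′. Moreover, for any α ∈ F the stabilizer in H of (0, e₂, αe₂, 0) is {(h, n) ∈ H : h ∈ N₂ and xα + yρ² = 0}, where x, y are the (1,2)- and (2,3)-entries of n. -/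
/-! If `ξ₁ = 0` and the spans of `ξ₁, ξ₂` and of all four vectors are lines, then `ξ₂ ≠ 0` and
`ξ₃ = aξ₂`, `ξ₄ = bξ₂`. Since `SL₂(F)` is transitive on nonzero vectors
(`exists_vecMul_eq_e2`), `ξ₂` can be moved to `e₂`; the parameter `y = -bρ` of `N` then kills
the fourth entry, because `ρ³ = 1`. The representative obtained has `α = a`.

On a tuple with `ξ₁ = 0`, the group `N` changes only the fourth entry (`Hact_rep`), so an element
carrying `(0, e₂, αe₂, 0)` to `(0, e₂, α'e₂, 0)` satisfies `e₂h = e₂` and `αe₂ = α'e₂`, that is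
`α = α'`; the remaining condition for fixing the tuple is `(xα + yρ²)e₂ = 0`.
-/

noncomputable section

open Matrix

variable {F : Type*} [Field F]

/-- The standard basis vector `e₁ = (1,0)` of `F²`. -/
def e1 : Fin 2 → F := ![1, 0]

/-- The standard basis vector `e₂ = (0,1)` of `F²`. -/
def e2 : Fin 2 → F := ![0, 1]

/-- The right action of the element `(h, n(x,y,z))` of `H = SL₂(F) × N` on
`(F²)⁴`, where `x = n₁₂`, `y = n₂₃`, `z = n₁₃`:
`ξ^{(h,n)} = (ξ₁h, (ξ₂ + xξ₁)h, (ξ₃ − yξ₁)h,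
(ξ₄ + xξ₃ + yρ²ξ₂ − (yx + zρ)ξ₁)h)`. -/
def Hact (ρ : F) (h : Matrix.SpecialLinearGroup (Fin 2) F) (x y z : F)
    (ξ : Fin 4 → Fin 2 → F) : Fin 4 → Fin 2 → F :=
  ![Matrix.vecMul (ξ 0) (h : Matrix (Fin 2) (Fin 2) F),
    Matrix.vecMul (ξ 1 + x • ξ 0) (h : Matrix (Fin 2) (Fin 2) F),
    Matrix.vecMul (ξ 2 - y • ξ 0) (h : Matrix (Fin 2) (Fin 2) F),
    Matrix.vecMul (ξ 3 + x • ξ 2 + (y * ρ ^ 2) • ξ 1 - (y * x + z * ρ) • ξ 0)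
      (h : Matrix (Fin 2) (Fin 2) F)]


/-- `SL₂(F)` acts transitively on nonzero row vectors. -/
lemma exists_vecMul_eq_e2 (v : Fin 2 → F) (hv : v ≠ 0) :
    ∃ h : Matrix.SpecialLinearGroup (Fin 2) F,
      Matrix.vecMul v (h : Matrix (Fin 2) (Fin 2) F) = e2 := by
  obtain ⟨u, w, huw⟩ : ∃ u w : F, v 0 * u + v 1 * w = 1 := by
    by_cases h0 : v 0 = 0
    · have h1 : v 1 ≠ 0 := fun h1 => hv (by ext i; fin_cases i <;> simp [h0, h1])
      exact ⟨0, (v 1)⁻¹, by simp [h1]⟩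
    · exact ⟨(v 0)⁻¹, 0, by simp [h0]⟩
  refine ⟨⟨!![v 1, u; -v 0, w], by rw [Matrix.det_fin_two_of]; linear_combination huw⟩, ?_⟩
  ext i
  fin_cases i
  · simp [e2, Matrix.vecMul, dotProduct, Fin.sum_univ_two]; ring
  · simpa [e2, Matrix.vecMul, dotProduct, Fin.sum_univ_two] using huw

lemma e2_ne_zero : (e2 : Fin 2 → F) ≠ 0 := fun h => by simpa [e2] using congrFun h 1

/-- The action on tuples `(0, v, av, bv)`, where `N` affects only the fourth entry. -/
lemma Hact_rep (ρ : F) (h : Matrix.SpecialLinearGroup (Fin 2) F) (x y z a b : F)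
    (v : Fin 2 → F) :
    Hact ρ h x y z ![0, v, a • v, b • v] =
      ![0, Matrix.vecMul v (h : Matrix (Fin 2) (Fin 2) F),
        a • Matrix.vecMul v (h : Matrix (Fin 2) (Fin 2) F),
        (b + (x * a + y * ρ ^ 2)) • Matrix.vecMul v (h : Matrix (Fin 2) (Fin 2) F)] := by
  have h4 : b • v + x • a • v + (y * ρ ^ 2) • v = (b + (x * a + y * ρ ^ 2)) • v := by
    module
  simp [Hact, Matrix.smul_vecMul, h4]

/-- An element of `H` carries `(0, e₂, αe₂, 0)` to `(0, e₂, α'e₂, 0)` exactly when `h` fixes `e₂`,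
the parameters agree, and the fourth entry stays zero. -/
lemma Hact_rep_eq_iff (ρ : F) (h : Matrix.SpecialLinearGroup (Fin 2) F) (x y z α α' : F) :
    Hact ρ h x y z ![0, e2, α • e2, 0] = ![0, e2, α' • e2, 0] ↔
      Matrix.vecMul (e2 : Fin 2 → F) (h : Matrix (Fin 2) (Fin 2) F) = e2 ∧
        α = α' ∧ x * α + y * ρ ^ 2 = 0 := by
  have key := Hact_rep ρ h x y z α 0 e2
  rw [zero_smul, zero_add] at key
  rw [key]
  constructor
  · intro H
    have h1 : Matrix.vecMul (e2 : Fin 2 → F) (h : Matrix (Fin 2) (Fin 2) F) = e2 :=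
      congrFun H 1
    have h2 : α • Matrix.vecMul (e2 : Fin 2 → F) (h : Matrix (Fin 2) (Fin 2) F) = α' • e2 :=
      congrFun H 2
    have h3 : (x * α + y * ρ ^ 2) •
        Matrix.vecMul (e2 : Fin 2 → F) (h : Matrix (Fin 2) (Fin 2) F) = 0 := congrFun H 3
    rw [h1] at h2 h3
    exact ⟨h1, smul_left_injective F e2_ne_zero h2, (smul_eq_zero.mp h3).resolve_right e2_ne_zero⟩
  · rintro ⟨h1, rfl, h3⟩
    rw [h1, h3, zero_smul]

/-- The rank conditions force `ξ` to have the form `(0, v, av, bv)` with `v ≠ 0`. -/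
lemma eq_of_finrank (ξ : Fin 4 → Fin 2 → F)
    (h1 : Module.finrank F ↥(Submodule.span F ({ξ 0} : Set (Fin 2 → F))) = 0)
    (h2 : Module.finrank F ↥(Submodule.span F ({ξ 0, ξ 1} : Set (Fin 2 → F))) = 1)
    (h4 : Module.finrank F
      ↥(Submodule.span F ({ξ 0, ξ 1, ξ 2, ξ 3} : Set (Fin 2 → F))) = 1) :
    ∃ (v : Fin 2 → F) (a b : F), v ≠ 0 ∧ ξ = ![0, v, a • v, b • v] := by
  have h0 : ξ 0 = 0 := by
    rwa [Submodule.finrank_eq_zero, Submodule.span_singleton_eq_bot] at h1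
  have hv : ξ 1 ≠ 0 := by
    intro hv
    rw [h0, hv, Set.pair_eq_singleton, Submodule.span_zero_singleton, finrank_bot] at h2
    exact zero_ne_one h2
  have hle : Submodule.span F {ξ 0, ξ 1} ≤ Submodule.span F {ξ 0, ξ 1, ξ 2, ξ 3} :=
    Submodule.span_mono (by grind)
  -- Both spans are one-dimensional, so the inclusion is an equality.
  have heq := Submodule.eq_of_le_of_finrank_eq hle (h2.trans h4.symm)
  rw [h0, Submodule.span_insert_zero, ← h0] at heq
  obtain ⟨a, ha⟩ : ∃ a : F, a • ξ 1 = ξ 2 := Submodule.mem_span_singleton.mp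
    (heq ▸ Submodule.subset_span (by simp))
  obtain ⟨b, hb⟩ : ∃ b : F, b • ξ 1 = ξ 3 := Submodule.mem_span_singleton.mp
    (heq ▸ Submodule.subset_span (by simp))
  refine ⟨ξ 1, a, b, hv, ?_⟩
  funext i
  fin_cases i
  · exact h0
  · rfl
  · exact ha.symm
  · exact hb.symm

/-- Classification of the `H(F)`-orbits with `d₁ = 0` and
`d_{1,2} = d_{1,2,3,4} = 1`: representatives are `(0, e₂, αe₂, 0)` with `α ∈ F`,
distinct parameters give distinct orbits, and the stabilizer of `(0, e₂, αe₂, 0)`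
is `{(h, n) : h ∈ N₂, xα + yρ² = 0}`. -/
theorem statement19 (ρ : F) (hρ : ρ ^ 2 + ρ + 1 = 0) :
    (∀ ξ : Fin 4 → Fin 2 → F,
      Module.finrank F ↥(Submodule.span F ({ξ 0} : Set (Fin 2 → F))) = 0 →
      Module.finrank F ↥(Submodule.span F ({ξ 0, ξ 1} : Set (Fin 2 → F))) = 1 →
      Module.finrank F
        ↥(Submodule.span F ({ξ 0, ξ 1, ξ 2, ξ 3} : Set (Fin 2 → F))) = 1 →
      ∃ (α : F) (h : Matrix.SpecialLinearGroup (Fin 2) F) (x y z : F),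
        Hact ρ h x y z ξ = ![0, e2, α • e2, 0]) ∧
    (∀ α α' : F,
      ((∃ (h : Matrix.SpecialLinearGroup (Fin 2) F) (x y z : F),
          Hact ρ h x y z ![0, e2, α • e2, 0] = ![0, e2, α' • e2, 0]) ↔ α = α')) ∧
    (∀ (α : F) (h : Matrix.SpecialLinearGroup (Fin 2) F) (x y z : F),
      (Hact ρ h x y z ![0, e2, α • e2, 0] = ![0, e2, α • e2, 0]) ↔
        (Matrix.vecMul (e2 : Fin 2 → F) (h : Matrix (Fin 2) (Fin 2) F) = e2 ∧
          x * α + y * ρ ^ 2 = 0)) := by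
  refine ⟨fun ξ h1 h2 h4 => ?_, fun α α' => ⟨?_, ?_⟩, fun α h x y z => ?_⟩
  · obtain ⟨v, a, b, hv, rfl⟩ := eq_of_finrank ξ h1 h2 h4
    obtain ⟨h, hh⟩ := exists_vecMul_eq_e2 v hv
    refine ⟨a, h, 0, -b * ρ, 0, ?_⟩
    -- `ρ³ = 1`, so `yρ² = -b`.
    have hz : b + (0 * a + -b * ρ * ρ ^ 2) = 0 := by
      linear_combination (-b * (ρ - 1)) * hρ
    rw [Hact_rep, hh, hz, zero_smul]
  · rintro ⟨h, x, y, z, H⟩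
    exact ((Hact_rep_eq_iff ρ h x y z α α').mp H).2.1
  · intro hα
    exact ⟨1, 0, 0, 0, (Hact_rep_eq_iff ρ 1 0 0 0 α α').mpr ⟨by simp, hα, by simp⟩⟩
  · rw [Hact_rep_eq_iff]
    simp

end
end
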